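/- Assume d ∈ P_0(T_h) is piecewise constant with 0 < d_min ≤ d ≤ d_max. Let (p, m) be a classical solution of the damped linear wave system such that all partial derivatives ∂_t^i ∂_x^j p and ∂_t^i ∂_x^j m with i ≤ 2 and j ≤ 1 exist and are continuous, and let (p_h, m_h) be a semidiscrete solution of the inexact Petrov–Galerkin method (with the same a, b, d, f, g) which is twice continuously differentiable in time and has initial values p_h(0) = I_h^k p(0,·), m_h(0) = I_h^k m(0,·). Then there exists a constant C depending only on a, b, d_max and x_R − x_L such that, writing I = I_h^k and all norms being L² in x, for all 0 ≤ t ≤ T: ‖I p(t,·) − p_h(t)‖² + ‖I m(t,·) − m_h(t)‖² ≤ C(1+T)² ( h‖I ∂_t p(0,·) − ∂_t p(0,·)‖² + h‖I ∂_t m(0,·) − ∂_t m(0,·)‖² + h‖I m(0,·) − m(0,·)‖² + ∫_0^t [ ‖I m(s,·) − m(s,·)‖² + ‖I ∂_t p(s,·) − ∂_t p(s,·)‖² + ‖I ∂_t m(s,·) − ∂_t m(s,·)‖² + h‖I ∂_{tt} p(s,·) − ∂_{tt} p(s,·)‖² + h‖I ∂_{tt} m(s,·) − ∂_{tt} m(s,·)‖²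 ] ds ). -/

import Mathlib

/-!
The errors `u = I p - p_h`, `w = I m - m_h` satisfy the semidiscrete system with residuals
`ρp = a (I ∂ₜp - ∂ₜp)` and `ρm = b (I ∂ₜm - ∂ₜm) + d (I m - m)`: the interpolant reproduces the
spatial derivative against `P_{k-1}`, and since `d` is piecewise constant
`(d π m_h, q) = (m_h, d q)` (`Mesh.error_eq1`, `Mesh.error_eq2`).

Testing with the projections `π u`, `π w` gives, by integration by parts and nonnegativity of the
friction term, an energy estimate for `a ‖π u‖² + b ‖π w‖²` (`Mesh.energy`).  The growth rate
`1 / (1 + T)` in Gronwall's inequality (`gronwall_rate`) keeps the constant independent of `T` up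
to powers of `1 + T`.  The same estimate holds for the time derivatives after differentiating the
error equations.

The unprojected part is controlled by `‖u - π u‖ ≤ h ‖∂ₓ u‖` (`Mesh.norm_le_proj`), and testing the
error equations with `∂ₓ u`, `∂ₓ w` bounds the spatial derivatives by the residuals, the projected
time derivatives and `π w` (`Mesh.deriv_bound`).  These parts are combined in `Mesh.stability`; one
factor of `h` is traded for the length of the interval.  The initial error vanishes on all elements
by uniqueness of the interpolant (`Mesh.interp_unique`), so the initial energy of the time
derivative is bounded by the residual at time `0`.

All integrals are handled element by element: `Mesh.PC`, `Mesh.PJ`, `Mesh.TD` and `Mesh.FE` record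
regularity on closed elements while ignoring values at mesh points, where the functions are not
determined as elements of `L²`.
-/


open MeasureTheory intervalIntegral Set

noncomputable section

/-- A mesh `x_L = x_0 < x_1 < ⋯ < x_N = x_R` of the interval `[x_L, x_R]`. -/
structure Mesh (xL xR : ℝ) where
  N : ℕ
  Npos : 0 < N
  pt : ℕ → ℝ
  left : pt 0 = xL
  right : pt N = xR
  mono : ∀ n < N, pt n < pt (n + 1)

namespace Mesh

variable {xL xR : ℝ}

/-- The global mesh size `h = max_n (x_n - x_{n-1})`. -/
def hsize (M : Mesh xL xR) : ℝ :=
  (Finset.range M.N).sup' (Finset.nonempty_range_iff.mpr M.Npos.ne') fun n =>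
    M.pt (n + 1) - M.pt n

/-- `v ∈ P_j(T_h)`: on the interior of each element, `v` coincides with a polynomial of
degree at most `j`. -/
def PiecewisePoly (M : Mesh xL xR) (j : ℕ) (v : ℝ → ℝ) : Prop :=
  ∀ n < M.N, ∃ P : Polynomial ℝ, P.natDegree ≤ j ∧
    ∀ x ∈ Set.Ioo (M.pt n) (M.pt (n + 1)), v x = P.eval x

/-- `dv` is the elementwise derivative `∂_x v` of `v`. -/
def PiecewiseDeriv (M : Mesh xL xR) (v dv : ℝ → ℝ) : Prop :=
  ∀ n < M.N, ∀ x ∈ Set.Ioo (M.pt n) (M.pt (n + 1)), HasDerivAt v (dv x) x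

/-- `v` is continuous on `[x_L,x_R]` and piecewise continuously differentiable with
elementwise derivative `dv` (continuous up to the closure of each element). -/
def PiecewiseC1 (M : Mesh xL xR) (v dv : ℝ → ℝ) : Prop :=
  ContinuousOn v (Set.Icc xL xR) ∧ M.PiecewiseDeriv v dv ∧
    ∀ n < M.N, ∃ w : ℝ → ℝ, ContinuousOn w (Set.Icc (M.pt n) (M.pt (n + 1))) ∧
      Set.EqOn dv w (Set.Ioo (M.pt n) (M.pt (n + 1)))

end Mesh

/-- The `L²(x_L,x_R)` inner product `(v,w) = ∫ v w`. -/
def inner2 (xL xR : ℝ) (v w : ℝ → ℝ) : ℝ := ∫ x in xL..xR, v x * w x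

/-- The `L²(x_L,x_R)` norm. -/
def L2norm (xL xR : ℝ) (v : ℝ → ℝ) : ℝ := Real.sqrt (∫ x in xL..xR, v x ^ 2)

/-- `pw = π_h^j w` is the `L²`-orthogonal projection of `w` onto `P_j(T_h)`. -/
def IsL2Proj {xL xR : ℝ} (M : Mesh xL xR) (j : ℕ) (w pw : ℝ → ℝ) : Prop :=
  M.PiecewisePoly j pw ∧
    ∀ q : ℝ → ℝ, M.PiecewisePoly j q → inner2 xL xR pw q = inner2 xL xR w q

/-- `Iv = I_h^k v` is the interpolant of `v` (with elementwise derivative `dv`):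
`Iv` is a continuous piecewise polynomial of degree at most `k` with elementwise
derivative `dIv`, it matches `v` at the mesh points, and `(∂_x Iv, q̃) = (∂_x v, q̃)`
for all `q̃ ∈ P_{k-1}(T_h)`. -/
def IsInterp {xL xR : ℝ} (M : Mesh xL xR) (k : ℕ) (v dv Iv dIv : ℝ → ℝ) : Prop :=
  M.PiecewisePoly k Iv ∧ ContinuousOn Iv (Set.Icc xL xR) ∧ M.PiecewiseDeriv Iv dIv ∧
    (∀ n ≤ M.N, Iv (M.pt n) = v (M.pt n)) ∧
    ∀ q : ℝ → ℝ, M.PiecewisePoly (k - 1) q → inner2 xL xR dIv q = inner2 xL xR dv q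

/-- A semidiscrete solution `(p_h, m_h)` of the inexact Petrov--Galerkin method on `[0,T]`
for the damped linear wave system with coefficients `a`, `b`, friction `d` and data `f`, `g`.
The fields `dtp`, `dtm` are the time derivatives, `dxp`, `dxm` the elementwise spatial
derivatives, and `pim t = π_h^{k-1} (m_h t)`. -/
structure PGSol {xL xR : ℝ} (M : Mesh xL xR) (k : ℕ) (T a b : ℝ)
    (d : ℝ → ℝ) (f g : ℝ → ℝ → ℝ) where
  p : ℝ → ℝ → ℝ
  m : ℝ → ℝ → ℝ
  dtp : ℝ → ℝ → ℝ
  dtm : ℝ → ℝ → ℝ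
  dxp : ℝ → ℝ → ℝ
  dxm : ℝ → ℝ → ℝ
  pim : ℝ → ℝ → ℝ
  p_poly : ∀ t ∈ Set.Icc (0 : ℝ) T, M.PiecewisePoly k (p t)
  p_cont : ∀ t ∈ Set.Icc (0 : ℝ) T, ContinuousOn (p t) (Set.Icc xL xR)
  p_bcL : ∀ t ∈ Set.Icc (0 : ℝ) T, p t xL = 0
  p_bcR : ∀ t ∈ Set.Icc (0 : ℝ) T, p t xR = 0
  m_poly : ∀ t ∈ Set.Icc (0 : ℝ) T, M.PiecewisePoly k (m t)
  m_cont : ∀ t ∈ Set.Icc (0 : ℝ) T, ContinuousOn (m t) (Set.Icc xL xR)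
  dxp_spec : ∀ t ∈ Set.Icc (0 : ℝ) T, M.PiecewiseDeriv (p t) (dxp t)
  dxm_spec : ∀ t ∈ Set.Icc (0 : ℝ) T, M.PiecewiseDeriv (m t) (dxm t)
  dtp_spec : ∀ t ∈ Set.Icc (0 : ℝ) T, ∀ x,
    HasDerivWithinAt (fun s => p s x) (dtp t x) (Set.Icc (0 : ℝ) T) t
  dtm_spec : ∀ t ∈ Set.Icc (0 : ℝ) T, ∀ x,
    HasDerivWithinAt (fun s => m s x) (dtm t x) (Set.Icc (0 : ℝ) T) t
  dtp_cont : ∀ x, ContinuousOn (fun t => dtp t x) (Set.Icc (0 : ℝ) T)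
  dtm_cont : ∀ x, ContinuousOn (fun t => dtm t x) (Set.Icc (0 : ℝ) T)
  pim_spec : ∀ t ∈ Set.Icc (0 : ℝ) T, IsL2Proj M (k - 1) (m t) (pim t)
  eq1 : ∀ t ∈ Set.Icc (0 : ℝ) T, ∀ q : ℝ → ℝ, M.PiecewisePoly (k - 1) q →
    inner2 xL xR (fun x => a * dtp t x) q + inner2 xL xR (dxm t) q =
      inner2 xL xR (f t) q
  eq2 : ∀ t ∈ Set.Icc (0 : ℝ) T, ∀ v : ℝ → ℝ, M.PiecewisePoly (k - 1) v →
    inner2 xL xR (fun x => b * dtm t x) v + inner2 xL xR (dxp t) v +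
      inner2 xL xR (fun x => d x * pim t x) v = inner2 xL xR (g t) v

/-! ### Piecewise continuous functions on a mesh -/

namespace Mesh

variable {xL xR : ℝ}

lemma pt_le_pt (M : Mesh xL xR) {i j : ℕ} (hij : i ≤ j) (hj : j ≤ M.N) : M.pt i ≤ M.pt j := by
  induction j, hij using Nat.le_induction with
  | base => exact le_rfl
  | succ j hij ih => exact (ih (by omega)).trans (M.mono j (by omega)).le

lemma Icc_subset (M : Mesh xL xR) {n : ℕ} (hn : n < M.N) :
    Icc (M.pt n) (M.pt (n + 1)) ⊆ Icc xL xR := by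
  have h1 := M.pt_le_pt (Nat.zero_le n) hn.le
  have h2 := M.pt_le_pt (show n + 1 ≤ M.N from hn) le_rfl
  rw [M.left] at h1
  rw [M.right] at h2
  exact Icc_subset_Icc h1 h2

lemma Ioo_subset (M : Mesh xL xR) {n : ℕ} (hn : n < M.N) :
    Ioo (M.pt n) (M.pt (n + 1)) ⊆ Ioo xL xR := by
  have h1 := M.pt_le_pt (Nat.zero_le n) hn.le
  have h2 := M.pt_le_pt (show n + 1 ≤ M.N from hn) le_rfl
  rw [M.left] at h1
  rw [M.right] at h2
  exact Ioo_subset_Ioo h1 h2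

lemma lt (M : Mesh xL xR) : xL < xR := by
  have h2 := M.pt_le_pt (show 0 + 1 ≤ M.N from M.Npos) le_rfl
  have h1 := M.mono 0 M.Npos
  rw [M.left] at h1
  rw [M.right] at h2
  linarith

lemma elem_le_hsize (M : Mesh xL xR) {n : ℕ} (hn : n < M.N) :
    M.pt (n + 1) - M.pt n ≤ M.hsize :=
  Finset.le_sup' (fun n => M.pt (n + 1) - M.pt n) (Finset.mem_range.mpr hn)

lemma hsize_pos (M : Mesh xL xR) : 0 < M.hsize := by
  have h1 := M.mono 0 M.Npos
  have h2 := M.elem_le_hsize M.Npos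
  linarith

lemma hsize_le (M : Mesh xL xR) : M.hsize ≤ xR - xL := by
  refine Finset.sup'_le _ _ fun n hn => ?_
  have hn := Finset.mem_range.mp hn
  have h1 := M.Icc_subset hn (left_mem_Icc.mpr (M.mono n hn).le)
  have h2 := M.Icc_subset hn (right_mem_Icc.mpr (M.mono n hn).le)
  linarith [h1.1, h2.2]

/-- `v` agrees in the interior of each element with a function that is continuous on the closed
element.  Values at the mesh points are irrelevant. -/
def PC (M : Mesh xL xR) (v : ℝ → ℝ) : Prop :=
  ∀ n < M.N, ∃ g : ℝ → ℝ, ContinuousOn g (Icc (M.pt n) (M.pt (n + 1))) ∧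
    EqOn v g (Ioo (M.pt n) (M.pt (n + 1)))

variable {M : Mesh xL xR}

lemma PC.add {v w : ℝ → ℝ} (hv : M.PC v) (hw : M.PC w) : M.PC (fun x => v x + w x) := by
  intro n hn
  obtain ⟨g, hg, hvg⟩ := hv n hn
  obtain ⟨g', hg', hvg'⟩ := hw n hn
  exact ⟨fun x => g x + g' x, hg.add hg', fun x hx => by simp only [hvg hx, hvg' hx]⟩

lemma PC.sub {v w : ℝ → ℝ} (hv : M.PC v) (hw : M.PC w) : M.PC (fun x => v x - w x) := by
  intro n hn
  obtain ⟨g, hg, hvg⟩ := hv n hn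
  obtain ⟨g', hg', hvg'⟩ := hw n hn
  exact ⟨fun x => g x - g' x, hg.sub hg', fun x hx => by simp only [hvg hx, hvg' hx]⟩

lemma PC.mul {v w : ℝ → ℝ} (hv : M.PC v) (hw : M.PC w) : M.PC (fun x => v x * w x) := by
  intro n hn
  obtain ⟨g, hg, hvg⟩ := hv n hn
  obtain ⟨g', hg', hvg'⟩ := hw n hn
  exact ⟨fun x => g x * g' x, hg.mul hg', fun x hx => by simp only [hvg hx, hvg' hx]⟩

lemma PC.const (c : ℝ) : M.PC (fun _ => c) :=
  fun _ _ => ⟨fun _ => c, continuousOn_const, fun _ _ => rfl⟩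

lemma PC.cmul {v : ℝ → ℝ} (c : ℝ) (hv : M.PC v) : M.PC (fun x => c * v x) :=
  (PC.const c).mul hv

lemma PC.sq {v : ℝ → ℝ} (hv : M.PC v) : M.PC (fun x => v x ^ 2) := by
  simpa only [pow_two] using hv.mul hv

lemma PC.of_continuousOn {v : ℝ → ℝ} (hv : ContinuousOn v (Icc xL xR)) : M.PC v :=
  fun _ hn => ⟨v, hv.mono (M.Icc_subset hn), fun _ _ => rfl⟩

lemma PiecewisePoly.pc {j : ℕ} {v : ℝ → ℝ} (hv : M.PiecewisePoly j v) : M.PC v := by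
  intro n hn
  obtain ⟨P, -, hP⟩ := hv n hn
  exact ⟨fun x => P.eval x, P.continuous.continuousOn, hP⟩

lemma PC.intInt_elem {v : ℝ → ℝ} (hv : M.PC v) {n : ℕ} (hn : n < M.N) :
    IntervalIntegrable v volume (M.pt n) (M.pt (n + 1)) := by
  obtain ⟨g, hg, hvg⟩ := hv n hn
  have h := (M.mono n hn).le
  refine IntervalIntegrable.congr_uIoo (f := g) ?_ ?_
  · rw [← uIcc_of_le h] at hg
    exact hg.intervalIntegrable
  · rw [uIoo_of_le h]
    exact hvg.symm

lemma PC.intInt {v : ℝ → ℝ} (hv : M.PC v) : IntervalIntegrable v volume xL xR := by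
  have := IntervalIntegrable.trans_iterate (μ := volume) (f := v) (a := M.pt) (n := M.N)
    (fun n hn => hv.intInt_elem hn)
  rwa [M.left, M.right] at this

lemma PC.integral_eq_sum {v : ℝ → ℝ} (hv : M.PC v) :
    ∫ x in xL..xR, v x = ∑ n ∈ Finset.range M.N, ∫ x in M.pt n..M.pt (n + 1), v x := by
  have := sum_integral_adjacent_intervals (μ := volume) (f := v) (a := M.pt) (n := M.N)
    (fun n hn => hv.intInt_elem hn)
  rw [M.left, M.right] at this
  exact this.symm

lemma integral_elem_congr (M : Mesh xL xR) {n : ℕ} (hn : n < M.N) {v w : ℝ → ℝ}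
    (h : EqOn v w (Ioo (M.pt n) (M.pt (n + 1)))) :
    ∫ x in M.pt n..M.pt (n + 1), v x = ∫ x in M.pt n..M.pt (n + 1), w x :=
  integral_congr_Ioo_of_le (M.mono n hn).le h

/-- Functions agreeing off the mesh points have the same integral. -/
lemma PC.integral_congr {v w : ℝ → ℝ} (hw : M.PC w)
    (h : ∀ n < M.N, EqOn v w (Ioo (M.pt n) (M.pt (n + 1)))) :
    ∫ x in xL..xR, v x = ∫ x in xL..xR, w x := by
  have hv : M.PC v := fun n hn => by
    obtain ⟨g, hg, hwg⟩ := hw n hn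
    exact ⟨g, hg, (h n hn).trans hwg⟩
  rw [hv.integral_eq_sum, hw.integral_eq_sum]
  exact Finset.sum_congr rfl fun n hn => M.integral_elem_congr (Finset.mem_range.mp hn)
    (h n (Finset.mem_range.mp hn))

/-- Monotonicity of the integral, where the comparison may fail at mesh points. -/
lemma PC.integral_mono {v w : ℝ → ℝ} (hv : M.PC v) (hw : M.PC w)
    (h : ∀ n < M.N, ∀ x ∈ Ioo (M.pt n) (M.pt (n + 1)), v x ≤ w x) :
    ∫ x in xL..xR, v x ≤ ∫ x in xL..xR, w x := by
  rw [hv.integral_eq_sum, hw.integral_eq_sum]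
  refine Finset.sum_le_sum fun n hn => ?_
  have hn := Finset.mem_range.mp hn
  exact integral_mono_on_of_le_Ioo (M.mono n hn).le (hv.intInt_elem hn) (hw.intInt_elem hn) (h n hn)

/-! ### Piecewise polynomials -/

lemma PiecewisePoly.add {j : ℕ} {v w : ℝ → ℝ} (hv : M.PiecewisePoly j v)
    (hw : M.PiecewisePoly j w) : M.PiecewisePoly j (fun x => v x + w x) := by
  intro n hn
  obtain ⟨P, hP, hvP⟩ := hv n hn
  obtain ⟨Q, hQ, hwQ⟩ := hw n hn
  exact ⟨P + Q, Polynomial.natDegree_add_le_of_degree_le hP hQ,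
    fun x hx => by simp [hvP x hx, hwQ x hx]⟩

lemma PiecewisePoly.sub {j : ℕ} {v w : ℝ → ℝ} (hv : M.PiecewisePoly j v)
    (hw : M.PiecewisePoly j w) : M.PiecewisePoly j (fun x => v x - w x) := by
  intro n hn
  obtain ⟨P, hP, hvP⟩ := hv n hn
  obtain ⟨Q, hQ, hwQ⟩ := hw n hn
  exact ⟨P - Q, (Polynomial.natDegree_sub_le P Q).trans (max_le hP hQ),
    fun x hx => by simp [hvP x hx, hwQ x hx]⟩

/-- Multiplication by a piecewise constant function preserves `P_j(T_h)`. -/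
lemma PiecewisePoly.mul_const {j : ℕ} {d v : ℝ → ℝ} (hd : M.PiecewisePoly 0 d)
    (hv : M.PiecewisePoly j v) : M.PiecewisePoly j (fun x => d x * v x) := by
  intro n hn
  obtain ⟨P, hP, hvP⟩ := hd n hn
  obtain ⟨Q, hQ, hwQ⟩ := hv n hn
  refine ⟨P * Q, Polynomial.natDegree_mul_le.trans (by omega),
    fun x hx => by simp [hvP x hx, hwQ x hx]⟩

lemma PiecewisePoly.deriv {k : ℕ} {v dv : ℝ → ℝ} (hv : M.PiecewisePoly k v)
    (hdv : M.PiecewiseDeriv v dv) : M.PiecewisePoly (k - 1) dv := by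
  intro n hn
  obtain ⟨P, hP, hvP⟩ := hv n hn
  refine ⟨P.derivative, (Polynomial.natDegree_derivative_le P).trans (by omega), fun x hx => ?_⟩
  refine (hdv n hn x hx).unique ((P.hasDerivAt x).congr_of_eventuallyEq ?_)
  filter_upwards [Ioo_mem_nhds hx.1 hx.2] with y hy using hvP y hy

lemma PiecewiseDeriv.sub {v dv w dw : ℝ → ℝ} (hv : M.PiecewiseDeriv v dv)
    (hw : M.PiecewiseDeriv w dw) :
    M.PiecewiseDeriv (fun x => v x - w x) (fun x => dv x - dw x) :=
  fun n hn x hx => (hv n hn x hx).sub (hw n hn x hx)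

/-- Testing against a polynomial supported on a single element. -/
lemma inner2_indicator (M : Mesh xL xR) {j n : ℕ} (hn : n < M.N) {Q : Polynomial ℝ}
    (hQ : Q.natDegree ≤ j) {v : ℝ → ℝ} (hv : M.PC v) :
    M.PiecewisePoly j ((Ioo (M.pt n) (M.pt (n + 1))).indicator fun x => Q.eval x) ∧
    inner2 xL xR v ((Ioo (M.pt n) (M.pt (n + 1))).indicator fun x => Q.eval x) =
      ∫ x in M.pt n..M.pt (n + 1), v x * Q.eval x := by
  have hzero : ∀ i < M.N, i ≠ n → ∀ x ∈ Ioo (M.pt i) (M.pt (i + 1)),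
      (Ioo (M.pt n) (M.pt (n + 1))).indicator (fun x => Q.eval x) x = 0 := by
    intro i hi hin x hx
    refine indicator_of_notMem (fun hx' => ?_) _
    rcases lt_or_gt_of_ne hin with h | h
    · have := M.pt_le_pt (show i + 1 ≤ n from h) hn.le
      linarith [hx.2, hx'.1]
    · have := M.pt_le_pt (show n + 1 ≤ i from h) hi.le
      linarith [hx.1, hx'.2]
  have hpoly : M.PiecewisePoly j ((Ioo (M.pt n) (M.pt (n + 1))).indicator fun x => Q.eval x) := by
    intro i hi
    by_cases hin : i = n
    · subst hin
      exact ⟨Q, hQ, fun x hx => indicator_of_mem hx _⟩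
    · exact ⟨0, by simp, fun x hx => by rw [hzero i hi hin x hx]; simp⟩
  refine ⟨hpoly, ?_⟩
  rw [inner2, (hv.mul hpoly.pc).integral_eq_sum, Finset.sum_eq_single n]
  · refine M.integral_elem_congr hn fun x hx => ?_
    simp only [indicator_of_mem hx]
  · intro i hi hin
    have hi := Finset.mem_range.mp hi
    rw [M.integral_elem_congr hi (w := fun _ => 0) fun x hx => ?_]
    · simp
    · simp only [hzero i hi hin x hx, mul_zero]
  · intro h
    exact absurd (Finset.mem_range.mpr hn) h

/-! ### The bilinear form -/

lemma inner2_add_left {u v q : ℝ → ℝ} (hu : M.PC u) (hv : M.PC v) (hq : M.PC q) :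
    inner2 xL xR (fun x => u x + v x) q = inner2 xL xR u q + inner2 xL xR v q := by
  simp only [inner2, add_mul]
  exact integral_add (hu.mul hq).intInt (hv.mul hq).intInt

lemma inner2_sub_left {u v q : ℝ → ℝ} (hu : M.PC u) (hv : M.PC v) (hq : M.PC q) :
    inner2 xL xR (fun x => u x - v x) q = inner2 xL xR u q - inner2 xL xR v q := by
  simp only [inner2, sub_mul]
  exact integral_sub (hu.mul hq).intInt (hv.mul hq).intInt

lemma inner2_cmul_left (c : ℝ) (u q : ℝ → ℝ) :
    inner2 xL xR (fun x => c * u x) q = c * inner2 xL xR u q := by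
  simp only [inner2, mul_assoc]
  exact intervalIntegral.integral_const_mul _ _

lemma inner2_comm (u q : ℝ → ℝ) : inner2 xL xR u q = inner2 xL xR q u := by
  simp only [inner2, mul_comm]

lemma inner2_self_nonneg (h : xL < xR) (u : ℝ → ℝ) : 0 ≤ inner2 xL xR u u :=
  integral_nonneg h.le fun x _ => mul_self_nonneg (u x)

lemma L2norm_sq (h : xL < xR) (u : ℝ → ℝ) : L2norm xL xR u ^ 2 = inner2 xL xR u u := by
  rw [L2norm, Real.sq_sqrt]
  · simp only [inner2, pow_two]
  · exact integral_nonneg h.le fun x _ => sq_nonneg (u x)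

/-- Young's inequality with weight `c > 0`. -/
lemma inner2_young {u v : ℝ → ℝ} (hu : M.PC u) (hv : M.PC v) {c : ℝ} (hc : 0 < c) :
    2 * inner2 xL xR u v ≤ c * inner2 xL xR u u + c⁻¹ * inner2 xL xR v v := by
  simp only [inner2]
  rw [← intervalIntegral.integral_const_mul, ← intervalIntegral.integral_const_mul,
    ← intervalIntegral.integral_const_mul, ← intervalIntegral.integral_add
    ((hu.mul hu).cmul c).intInt ((hv.mul hv).cmul c⁻¹).intInt]
  refine PC.integral_mono ((hu.mul hv).cmul 2) (((hu.mul hu).cmul c).add ((hv.mul hv).cmul c⁻¹))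
    fun n hn x hx => ?_
  have h1 : 0 ≤ c⁻¹ * (c * u x - v x) ^ 2 := by positivity
  have h2 : c⁻¹ * (c * u x - v x) ^ 2 = c * (u x * u x) + c⁻¹ * (v x * v x) - 2 * (u x * v x) := by
    field_simp
    ring
  linarith

end Mesh

/-! ### Differentiating integrals with respect to time -/

lemma continuousOn_integral_param {T α β : ℝ} (hT : 0 ≤ T) (hαβ : α ≤ β) {G : ℝ → ℝ → ℝ}
    (hG : ContinuousOn (fun z : ℝ × ℝ => G z.1 z.2) (Icc 0 T ×ˢ Icc α β)) :
    ContinuousOn (fun t => ∫ x in α..β, G t x) (Icc 0 T) := by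
  -- Extend `G` continuously to the whole plane by clamping both arguments.
  have hc : Continuous (fun z : ℝ × ℝ =>
      G (projIcc 0 T hT z.1) (projIcc α β hαβ z.2)) := by
    refine hG.comp_continuous (f := fun z : ℝ × ℝ =>
      (((projIcc 0 T hT z.1 : ℝ)), ((projIcc α β hαβ z.2 : ℝ)))) ?_ ?_
    · exact (continuous_subtype_val.comp (continuous_projIcc.comp continuous_fst)).prodMk
        (continuous_subtype_val.comp (continuous_projIcc.comp continuous_snd))
    · exact fun z => ⟨Subtype.coe_prop _, Subtype.coe_prop _⟩
  have h1 := continuous_parametric_intervalIntegral_of_continuous' (μ := volume)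
    (f := fun t x => G (projIcc 0 T hT t) (projIcc α β hαβ x)) hc α β
  refine h1.continuousOn.congr fun t ht => ?_
  refine intervalIntegral.integral_congr fun x hx => ?_
  rw [uIcc_of_le hαβ] at hx
  simp only [projIcc_of_mem hT ht, projIcc_of_mem hαβ hx]

lemma hasDerivAt_integral_param {T α β : ℝ} (hαβ : α ≤ β) {G G' : ℝ → ℝ → ℝ}
    (hG : ContinuousOn (fun z : ℝ × ℝ => G z.1 z.2) (Icc 0 T ×ˢ Icc α β))
    (hG' : ContinuousOn (fun z : ℝ × ℝ => G' z.1 z.2) (Icc 0 T ×ˢ Icc α β))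
    (hd : ∀ t ∈ Ioo 0 T, ∀ x ∈ Icc α β, HasDerivAt (fun s => G s x) (G' t x) t)
    {t : ℝ} (ht : t ∈ Ioo 0 T) :
    HasDerivAt (fun s => ∫ x in α..β, G s x) (∫ x in α..β, G' t x) t := by
  obtain ⟨B, hB⟩ := (isCompact_Icc.prod isCompact_Icc).exists_bound_of_continuousOn hG'
  have slice : ∀ {H : ℝ → ℝ → ℝ},
      ContinuousOn (fun z : ℝ × ℝ => H z.1 z.2) (Icc 0 T ×ˢ Icc α β) →
      ∀ s ∈ Icc 0 T, IntervalIntegrable (H s) volume α β := by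
    intro H hH s hs
    refine ContinuousOn.intervalIntegrable ?_
    rw [uIcc_of_le hαβ]
    exact hH.comp (f := fun x => (s, x)) (by fun_prop) fun x hx => ⟨hs, hx⟩
  refine (intervalIntegral.hasDerivAt_integral_of_dominated_loc_of_deriv_le (μ := volume)
    (F := G) (F' := G') (s := Ioo 0 T) (bound := fun _ => B) (Ioo_mem_nhds ht.1 ht.2) ?_
    (slice hG t (Ioo_subset_Icc_self ht)) ?_ ?_ ?_ ?_).2
  · filter_upwards [Ioo_mem_nhds ht.1 ht.2] with s hs
    exact (slice hG s (Ioo_subset_Icc_self hs)).def'.aestronglyMeasurable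
  · exact (slice hG' t (Ioo_subset_Icc_self ht)).def'.aestronglyMeasurable
  · refine Filter.Eventually.of_forall fun x hx s hs => ?_
    rw [uIoc_of_le hαβ] at hx
    exact hB (s, x) ⟨Ioo_subset_Icc_self hs, Ioc_subset_Icc_self hx⟩
  · exact intervalIntegrable_const
  · refine Filter.Eventually.of_forall fun x hx s hs => ?_
    rw [uIoc_of_le hαβ] at hx
    exact hd s hs x (Ioc_subset_Icc_self hx)

namespace Mesh

variable {xL xR : ℝ}

/-- `F` agrees, in the interior of each element, with a function jointly continuous in time and
space on `[0,T]` times the closed element. -/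
def PJ (M : Mesh xL xR) (T : ℝ) (F : ℝ → ℝ → ℝ) : Prop :=
  ∀ n < M.N, ∃ G : ℝ → ℝ → ℝ,
    ContinuousOn (fun z : ℝ × ℝ => G z.1 z.2) (Icc 0 T ×ˢ Icc (M.pt n) (M.pt (n + 1))) ∧
    ∀ t ∈ Icc 0 T, ∀ x ∈ Ioo (M.pt n) (M.pt (n + 1)), F t x = G t x

/-- `F'` is the time derivative of `F` on `(0,T)`, both being elementwise jointly continuous on
`[0,T]` times the closed element; values at mesh points are irrelevant. -/
def TD (M : Mesh xL xR) (T : ℝ) (F F' : ℝ → ℝ → ℝ) : Prop :=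
  ∀ n < M.N, ∃ G G' : ℝ → ℝ → ℝ,
    ContinuousOn (fun z : ℝ × ℝ => G z.1 z.2) (Icc 0 T ×ˢ Icc (M.pt n) (M.pt (n + 1))) ∧
    ContinuousOn (fun z : ℝ × ℝ => G' z.1 z.2) (Icc 0 T ×ˢ Icc (M.pt n) (M.pt (n + 1))) ∧
    (∀ t ∈ Ioo 0 T, ∀ x ∈ Icc (M.pt n) (M.pt (n + 1)),
      HasDerivAt (fun s => G s x) (G' t x) t) ∧
    ∀ t ∈ Icc 0 T, ∀ x ∈ Ioo (M.pt n) (M.pt (n + 1)), F t x = G t x ∧ F' t x = G' t x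

variable {M : Mesh xL xR} {T : ℝ}

lemma PJ.pc {F : ℝ → ℝ → ℝ} (hF : M.PJ T F) {t : ℝ} (ht : t ∈ Icc 0 T) : M.PC (F t) := by
  intro n hn
  obtain ⟨G, hG, hFG⟩ := hF n hn
  exact ⟨G t, hG.comp (f := fun x => (t, x)) (by fun_prop) fun x hx => ⟨ht, hx⟩,
    fun x hx => hFG t ht x hx⟩

lemma PJ.mul {F H : ℝ → ℝ → ℝ} (hF : M.PJ T F) (hH : M.PJ T H) :
    M.PJ T (fun t x => F t x * H t x) := by
  intro n hn
  obtain ⟨G, hG, hFG⟩ := hF n hn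
  obtain ⟨K, hK, hHK⟩ := hH n hn
  exact ⟨fun t x => G t x * K t x, hG.mul hK, fun t ht x hx => by
    simp only [hFG t ht x hx, hHK t ht x hx]⟩

lemma TD.left {F F' : ℝ → ℝ → ℝ} (hF : M.TD T F F') : M.PJ T F := by
  intro n hn
  obtain ⟨G, G', hG, hG', hd, h⟩ := hF n hn
  exact ⟨G, hG, fun t ht x hx => (h t ht x hx).1⟩

lemma TD.right {F F' : ℝ → ℝ → ℝ} (hF : M.TD T F F') : M.PJ T F' := by
  intro n hn
  obtain ⟨G, G', hG, hG', hd, h⟩ := hF n hn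
  exact ⟨G', hG', fun t ht x hx => (h t ht x hx).2⟩

lemma TD.add {F F' H H' : ℝ → ℝ → ℝ} (hF : M.TD T F F') (hH : M.TD T H H') :
    M.TD T (fun t x => F t x + H t x) (fun t x => F' t x + H' t x) := by
  intro n hn
  obtain ⟨G, G', hG, hG', hd, h⟩ := hF n hn
  obtain ⟨K, K', hK, hK', hd2, h2⟩ := hH n hn
  exact ⟨fun t x => G t x + K t x, fun t x => G' t x + K' t x, hG.add hK, hG'.add hK',
    fun t ht x hx => (hd t ht x hx).add (hd2 t ht x hx), fun t ht x hx => by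
      simp only [h t ht x hx, h2 t ht x hx, and_self]⟩

lemma TD.sub {F F' H H' : ℝ → ℝ → ℝ} (hF : M.TD T F F') (hH : M.TD T H H') :
    M.TD T (fun t x => F t x - H t x) (fun t x => F' t x - H' t x) := by
  intro n hn
  obtain ⟨G, G', hG, hG', hd, h⟩ := hF n hn
  obtain ⟨K, K', hK, hK', hd2, h2⟩ := hH n hn
  exact ⟨fun t x => G t x - K t x, fun t x => G' t x - K' t x, hG.sub hK, hG'.sub hK',
    fun t ht x hx => (hd t ht x hx).sub (hd2 t ht x hx), fun t ht x hx => by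
      simp only [h t ht x hx, h2 t ht x hx, and_self]⟩

lemma TD.mul {F F' H H' : ℝ → ℝ → ℝ} (hF : M.TD T F F') (hH : M.TD T H H') :
    M.TD T (fun t x => F t x * H t x) (fun t x => F' t x * H t x + F t x * H' t x) := by
  intro n hn
  obtain ⟨G, G', hG, hG', hd, h⟩ := hF n hn
  obtain ⟨K, K', hK, hK', hd2, h2⟩ := hH n hn
  exact ⟨fun t x => G t x * K t x, fun t x => G' t x * K t x + G t x * K' t x, hG.mul hK,
    (hG'.mul hK).add (hG.mul hK'),
    fun t ht x hx => (hd t ht x hx).mul (hd2 t ht x hx), fun t ht x hx => by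
      simp only [h t ht x hx, h2 t ht x hx, and_self]⟩

lemma TD.static {v : ℝ → ℝ} (hv : M.PC v) : M.TD T (fun _ => v) (fun _ _ => 0) := by
  intro n hn
  obtain ⟨g, hg, h⟩ := hv n hn
  refine ⟨fun _ => g, fun _ _ => 0, ?_, continuousOn_const, fun t _ x _ => hasDerivAt_const _ _,
    fun t ht x hx => ⟨h hx, rfl⟩⟩
  exact hg.comp (f := fun z : ℝ × ℝ => z.2) (by fun_prop) fun z hz => hz.2

/-- Multiplication by a time-independent piecewise continuous function. -/
lemma TD.smul {v : ℝ → ℝ} {F F' : ℝ → ℝ → ℝ} (hv : M.PC v) (hF : M.TD T F F') :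
    M.TD T (fun t x => v x * F t x) (fun t x => v x * F' t x) := by
  simpa using (TD.static (T := T) hv).mul hF

lemma TD.cmul {F F' : ℝ → ℝ → ℝ} (c : ℝ) (hF : M.TD T F F') :
    M.TD T (fun t x => c * F t x) (fun t x => c * F' t x) :=
  TD.smul (PC.const c) hF

lemma PJ.continuousOn_integral {F : ℝ → ℝ → ℝ} (hT : 0 ≤ T) (hF : M.PJ T F) :
    ContinuousOn (fun t => ∫ x in xL..xR, F t x) (Icc 0 T) := by
  have h : ContinuousOn (fun t => ∑ n ∈ Finset.range M.N, ∫ x in M.pt n..M.pt (n + 1), F t x)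
      (Icc 0 T) := by
    refine continuousOn_finsetSum _ fun n hn => ?_
    have hn := Finset.mem_range.mp hn
    obtain ⟨G, hG, hFG⟩ := hF n hn
    refine (continuousOn_integral_param hT (M.mono n hn).le hG).congr fun t ht => ?_
    exact M.integral_elem_congr hn fun x hx => hFG t ht x hx
  exact h.congr fun t ht => (hF.pc ht).integral_eq_sum

lemma TD.hasDerivAt_integral {F F' : ℝ → ℝ → ℝ} (hF : M.TD T F F') {t : ℝ} (ht : t ∈ Ioo 0 T) :
    HasDerivAt (fun s => ∫ x in xL..xR, F s x) (∫ x in xL..xR, F' t x) t := by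
  have h : HasDerivAt (fun s => ∑ n ∈ Finset.range M.N, ∫ x in M.pt n..M.pt (n + 1), F s x)
      (∑ n ∈ Finset.range M.N, ∫ x in M.pt n..M.pt (n + 1), F' t x) t := by
    refine HasDerivAt.fun_sum fun n hn => ?_
    have hn := Finset.mem_range.mp hn
    obtain ⟨G, G', hG, hG', hd, h⟩ := hF n hn
    rw [M.integral_elem_congr hn fun x hx => (h t (Ioo_subset_Icc_self ht) x hx).2]
    refine (hasDerivAt_integral_param (M.mono n hn).le hG hG' hd ht).congr_of_eventuallyEq ?_
    filter_upwards [Ioo_mem_nhds ht.1 ht.2] with s hs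
    exact M.integral_elem_congr hn fun x hx => (h s (Ioo_subset_Icc_self hs) x hx).1
  rw [(hF.right.pc (Ioo_subset_Icc_self ht)).integral_eq_sum]
  refine h.congr_of_eventuallyEq ?_
  filter_upwards [Ioo_mem_nhds ht.1 ht.2] with s hs
  exact (hF.left.pc (Ioo_subset_Icc_self hs)).integral_eq_sum

lemma TD.hasDerivAt_inner2_self {F F' : ℝ → ℝ → ℝ} (hF : M.TD T F F') {t : ℝ}
    (ht : t ∈ Ioo 0 T) :
    HasDerivAt (fun s => inner2 xL xR (F s) (F s)) (2 * inner2 xL xR (F' t) (F t)) t := by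
  have h := (hF.mul hF).hasDerivAt_integral ht
  have e : ∫ x in xL..xR, (F' t x * F t x + F t x * F' t x) = 2 * inner2 xL xR (F' t) (F t) := by
    rw [inner2, ← intervalIntegral.integral_const_mul]
    exact intervalIntegral.integral_congr fun x _ => by ring
  rw [e] at h
  exact h

lemma TD.hasDerivAt_inner2 {F F' : ℝ → ℝ → ℝ} {q : ℝ → ℝ} (hF : M.TD T F F') (hq : M.PC q) {t : ℝ}
    (ht : t ∈ Ioo 0 T) :
    HasDerivAt (fun s => inner2 xL xR (F s) q) (inner2 xL xR (F' t) q) t := by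
  have h := (hF.mul (TD.static hq)).hasDerivAt_integral ht
  simpa [inner2] using h

lemma PJ.continuousOn_inner2 {F : ℝ → ℝ → ℝ} (hT : 0 ≤ T) (hF : M.PJ T F) :
    ContinuousOn (fun t => inner2 xL xR (F t) (F t)) (Icc 0 T) :=
  (hF.mul hF).continuousOn_integral hT

end Mesh

/-- A Grönwall inequality with rate `1/(1+T)`, so that the exponential factor stays below
`e < 3` on `[0,T]`. -/
lemma gronwall_rate {T : ℝ} (hT : 0 < T) {G G' r : ℝ → ℝ} (hG : ContinuousOn G (Icc 0 T))
    (hG' : ∀ t ∈ Ioo 0 T, HasDerivAt G (G' t) t) (hr : ContinuousOn r (Icc 0 T))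
    (hr0 : ∀ t ∈ Icc 0 T, 0 ≤ r t) (hG0 : 0 ≤ G 0)
    (hle : ∀ t ∈ Ioo 0 T, G' t ≤ (1 + T)⁻¹ * G t + (1 + T) * r t) {t : ℝ} (ht : t ∈ Icc 0 T) :
    G t ≤ 3 * (G 0 + (1 + T) * ∫ s in (0 : ℝ)..t, r s) := by
  set τ := 1 + T with hτ
  have hτ0 : 0 < τ := by positivity
  have hII : ∀ s ∈ Icc 0 T, IntervalIntegrable r volume 0 s := fun s hs => by
    refine (hr.mono ?_).intervalIntegrable
    rw [uIcc_of_le hs.1]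
    exact Icc_subset_Icc_right hs.2
  have hRc : ContinuousOn (fun s => ∫ y in (0 : ℝ)..s, r y) (Icc 0 T) := by
    have := continuousOn_primitive_interval' (μ := volume) (f := r) (a := 0) (b₁ := 0) (b₂ := T)
      (hII T ⟨hT.le, le_rfl⟩) (by simp [hT.le])
    rwa [uIcc_of_le hT.le] at this
  have hRd : ∀ s ∈ Ioo 0 T, HasDerivAt (fun s => ∫ y in (0 : ℝ)..s, r y) (r s) s := fun s hs => by
    have hnhds : Icc 0 T ∈ nhds s := Icc_mem_nhds hs.1 hs.2
    refine integral_hasDerivAt_right (hII s (Ioo_subset_Icc_self hs)) ?_ (hr.continuousAt hnhds)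
    exact hr.stronglyMeasurableAtFilter_nhdsWithin measurableSet_Icc s |>.filter_mono
      (by rw [nhdsWithin_eq_nhds.mpr hnhds])
  set φ : ℝ → ℝ := fun s => Real.exp (-(τ⁻¹ * s)) * G s - τ * ∫ y in (0 : ℝ)..s, r y with hφ
  have hφd : ∀ s ∈ Ioo 0 T, HasDerivAt φ
      (Real.exp (-(τ⁻¹ * s)) * (-(τ⁻¹)) * G s + Real.exp (-(τ⁻¹ * s)) * G' s - τ * r s) s := by
    intro s hs
    have h1 : HasDerivAt (fun s => -(τ⁻¹ * s)) (-(τ⁻¹)) s := by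
      simpa using ((hasDerivAt_id s).const_mul τ⁻¹).fun_neg
    exact (h1.exp.mul (hG' s hs)).sub ((hRd s hs).const_mul τ)
  have hanti : AntitoneOn φ (Icc 0 T) := by
    refine antitoneOn_of_deriv_nonpos (convex_Icc 0 T) ?_ ?_ ?_
    · exact ((Continuous.continuousOn (by fun_prop)).mul hG).sub (hRc.const_smul τ)
    · rw [interior_Icc]
      exact fun s hs => (hφd s hs).differentiableAt.differentiableWithinAt
    · rw [interior_Icc]
      intro s hs
      rw [(hφd s hs).deriv]
      have he : Real.exp (-(τ⁻¹ * s)) ≤ 1 := by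
        rw [Real.exp_le_one_iff]
        have := mul_nonneg (inv_nonneg.mpr hτ0.le) hs.1.le
        linarith
      have he0 := Real.exp_pos (-(τ⁻¹ * s))
      have h1 := mul_le_mul_of_nonneg_left (hle s hs) he0.le
      have h2 := mul_le_mul_of_nonneg_right he
        (mul_nonneg hτ0.le (hr0 s (Ioo_subset_Icc_self hs)))
      nlinarith
  have h0 := hanti (left_mem_Icc.mpr hT.le) ht ht.1
  simp only [hφ, mul_zero, neg_zero, Real.exp_zero, one_mul, integral_same, sub_zero] at h0
  have hI : 0 ≤ ∫ s in (0 : ℝ)..t, r s :=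
    integral_nonneg ht.1 fun s hs => hr0 s ⟨hs.1, hs.2.trans ht.2⟩
  have h3 : Real.exp (τ⁻¹ * t) ≤ 3 := by
    have h4 : τ⁻¹ * t ≤ 1 := by
      rw [inv_mul_le_iff₀ hτ0]
      linarith [ht.2]
    have := Real.exp_le_exp.mpr h4
    linarith [Real.exp_one_lt_d9]
  have h5 : G t = Real.exp (τ⁻¹ * t) * (Real.exp (-(τ⁻¹ * t)) * G t) := by
    rw [← mul_assoc, ← Real.exp_add]
    simp
  rw [h5]
  calc _ ≤ Real.exp (τ⁻¹ * t) * (G 0 + τ * ∫ s in (0 : ℝ)..t, r s) :=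
        mul_le_mul_of_nonneg_left (by linarith) (Real.exp_pos _).le
    _ ≤ _ := mul_le_mul_of_nonneg_right h3 (by positivity)

/-! ### Polynomials determined by linear functionals -/

/-- A family of `k + 1` linear functionals separating polynomials of degree at most `k` has a
dual basis. -/
lemma exists_dual (k : ℕ) (Λ : Fin (k + 1) → (Polynomial ℝ →ₗ[ℝ] ℝ))
    (hinj : ∀ P : Polynomial ℝ, P.natDegree ≤ k → (∀ j, Λ j P = 0) → P = 0) :
    ∃ ψ : Fin (k + 1) → Polynomial ℝ, (∀ j, (ψ j).natDegree ≤ k) ∧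
      (∀ i j, Λ i (ψ j) = if i = j then 1 else 0) ∧
      ∀ P : Polynomial ℝ, P.natDegree ≤ k → P = ∑ j, Λ j P • ψ j := by
  have hmem : ∀ P : Polynomial ℝ, P ∈ Polynomial.degreeLT ℝ (k + 1) ↔ P.natDegree ≤ k := by
    intro P
    rw [Polynomial.mem_degreeLT]
    constructor
    · intro h
      by_cases hP : P = 0
      · simp [hP]
      · have := (Polynomial.natDegree_lt_iff_degree_lt hP).mpr h
        omega
    · intro h
      exact lt_of_le_of_lt Polynomial.degree_le_natDegree (by exact_mod_cast Nat.lt_succ_of_le h)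
  let e := Polynomial.degreeLTEquiv ℝ (k + 1)
  let f : (Fin (k + 1) → ℝ) →ₗ[ℝ] (Fin (k + 1) → ℝ) :=
    ((LinearMap.pi Λ).comp (Polynomial.degreeLT ℝ (k + 1)).subtype).comp e.symm.toLinearMap
  have hf : Function.Injective f := by
    rw [injective_iff_map_eq_zero]
    intro c hc
    have h0 : ((e.symm c : Polynomial.degreeLT ℝ (k + 1)) : Polynomial ℝ) = 0 :=
      hinj _ ((hmem _).mp (e.symm c).2) fun j => congrFun hc j
    have : e.symm c = 0 := Subtype.ext h0
    simpa using this
  have hs : Function.Surjective f := LinearMap.injective_iff_surjective.mp hf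
  choose c hc using fun j : Fin (k + 1) => hs (Pi.single j 1)
  have hdual : ∀ i j, Λ i ((e.symm (c j) : Polynomial.degreeLT ℝ (k + 1)) : Polynomial ℝ) =
      if i = j then 1 else 0 := by
    intro i j
    have := congrFun (hc j) i
    rw [Pi.single_apply] at this
    exact this
  have hdeg : ∀ j, ((e.symm (c j) : Polynomial.degreeLT ℝ (k + 1)) : Polynomial ℝ).natDegree ≤ k :=
    fun j => (hmem _).mp (e.symm (c j)).2
  refine ⟨fun j => (e.symm (c j) : Polynomial.degreeLT ℝ (k + 1)), hdeg, hdual, fun P hP => ?_⟩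
  rw [← sub_eq_zero]
  refine hinj _ ?_ fun i => ?_
  · refine (Polynomial.natDegree_sub_le _ _).trans (max_le hP ?_)
    exact Polynomial.natDegree_sum_le_of_forall_le _ _ fun j _ =>
      (Polynomial.natDegree_smul_le _ _).trans (hdeg j)
  · simp [map_sum, hdual]

/-- The functional `P ↦ ∫_α^β P(x) x^j dx`. -/
def momentL (α β : ℝ) (j : ℕ) : Polynomial ℝ →ₗ[ℝ] ℝ where
  toFun P := ∫ x in α..β, P.eval x * x ^ j
  map_add' P Q := by
    simp only [Polynomial.eval_add, add_mul]
    exact intervalIntegral.integral_add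
      (Continuous.intervalIntegrable (by fun_prop) _ _)
      (Continuous.intervalIntegrable (by fun_prop) _ _)
  map_smul' c P := by
    simp only [Polynomial.eval_smul, smul_eq_mul, mul_assoc, RingHom.id_apply]
    exact intervalIntegral.integral_const_mul _ _

lemma momentL_apply (α β : ℝ) (j : ℕ) (P : Polynomial ℝ) :
    momentL α β j P = ∫ x in α..β, P.eval x * x ^ j := rfl

lemma integral_mul_of_moments {α β : ℝ} {k : ℕ} {D R : Polynomial ℝ} (hR : R.natDegree ≤ k)
    (h : ∀ j ≤ k, momentL α β j D = 0) : ∫ x in α..β, D.eval x * R.eval x = 0 := by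
  have e : ∀ x, D.eval x * R.eval x =
      ∑ i ∈ Finset.range (k + 1), R.coeff i * (D.eval x * x ^ i) := by
    intro x
    rw [Polynomial.eval_eq_sum_range' (Nat.lt_succ_of_le hR), Finset.mul_sum]
    exact Finset.sum_congr rfl fun i _ => by ring
  simp only [e]
  rw [intervalIntegral.integral_finsetSum fun i _ =>
    Continuous.intervalIntegrable (by fun_prop) _ _]
  refine Finset.sum_eq_zero fun i hi => ?_
  rw [intervalIntegral.integral_const_mul, ← momentL_apply,
    h i (by simpa [Nat.lt_succ_iff] using hi), mul_zero]

lemma eq_zero_of_moments {α β : ℝ} (hαβ : α < β) {k : ℕ} {D : Polynomial ℝ}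
    (hD : D.natDegree ≤ k) (h : ∀ j ≤ k, momentL α β j D = 0) : D = 0 := by
  by_contra hne
  have h0 := integral_mul_of_moments hD h
  have : ∃ c ∈ Icc α β, D.eval c ≠ 0 := by
    by_contra! hc
    exact hne (D.eq_zero_of_infinite_isRoot ((Icc_infinite hαβ).mono fun c hcm => hc c hcm))
  obtain ⟨c, hc, hcne⟩ := this
  have := intervalIntegral.integral_pos (f := fun x => D.eval x * D.eval x) hαβ
    (Continuous.continuousOn (by fun_prop)) (fun x _ => mul_self_nonneg _)
    ⟨c, hc, mul_self_pos.mpr hcne⟩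
  linarith

/-- `L²(α,β)`-orthogonal projections of monomials onto polynomials of degree at most `k`. -/
lemma exists_monomial_proj {α β : ℝ} (hαβ : α < β) (k i : ℕ) :
    ∃ Q : Polynomial ℝ, Q.natDegree ≤ k ∧
      ∀ j ≤ k, momentL α β j (Polynomial.X ^ i - Q) = 0 := by
  obtain ⟨ψ, hψ, hdual, -⟩ := exists_dual k (fun j => momentL α β j) fun P hP h =>
    eq_zero_of_moments hαβ hP fun j hj => h ⟨j, Nat.lt_succ_of_le hj⟩
  refine ⟨∑ l : Fin (k + 1), momentL α β l (Polynomial.X ^ i) • ψ l, ?_, fun j hj => ?_⟩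
  · exact Polynomial.natDegree_sum_le_of_forall_le _ _ fun j _ =>
      (Polynomial.natDegree_smul_le _ _).trans (hψ j)
  · have := fun l => hdual ⟨j, Nat.lt_succ_of_le hj⟩ l
    simp only at this
    simp [map_sum, this]

namespace Mesh

variable {xL xR : ℝ}

/-! ### Curves of piecewise polynomials -/

/-- `F` and `F'` are time-dependent piecewise polynomials of degree at most `k` whose monomial
coefficients on each element are continuous on `[0,T]`, those of `F'` being the time derivatives
of those of `F` on `(0,T)`. -/
def FE (M : Mesh xL xR) (k : ℕ) (T : ℝ) (F F' : ℝ → ℝ → ℝ) : Prop :=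
  ∀ n < M.N, ∃ c c' : ℕ → ℝ → ℝ,
    (∀ i, ContinuousOn (c i) (Icc 0 T) ∧ ContinuousOn (c' i) (Icc 0 T) ∧
      ∀ t ∈ Ioo 0 T, HasDerivAt (c i) (c' i t) t) ∧
    ∀ t ∈ Icc 0 T, ∀ x ∈ Ioo (M.pt n) (M.pt (n + 1)),
      F t x = ∑ i ∈ Finset.range (k + 1), c i t * x ^ i ∧
      F' t x = ∑ i ∈ Finset.range (k + 1), c' i t * x ^ i

/-- The function equal to `G n` in the interior of the `n`-th element, for every `n`. -/
def glue (M : Mesh xL xR) (G : ℕ → ℝ → ℝ) : ℝ → ℝ := fun x =>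
  ∑ n ∈ Finset.range M.N, (Ioo (M.pt n) (M.pt (n + 1))).indicator (G n) x

lemma glue_eq (M : Mesh xL xR) (G : ℕ → ℝ → ℝ) {n : ℕ} (hn : n < M.N) {x : ℝ}
    (hx : x ∈ Ioo (M.pt n) (M.pt (n + 1))) : M.glue G x = G n x := by
  rw [glue, Finset.sum_eq_single n]
  · exact indicator_of_mem hx _
  · intro i hi hin
    refine indicator_of_notMem (fun hx' => ?_) _
    rcases lt_or_gt_of_ne hin with h | h
    · have := M.pt_le_pt (show i + 1 ≤ n from h) hn.le
      linarith [hx.1, hx'.2]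
    · have := M.pt_le_pt (show n + 1 ≤ i from h) (Finset.mem_range.mp hi).le
      linarith [hx.2, hx'.1]
  · intro h
    exact absurd (Finset.mem_range.mpr hn) h

variable {M : Mesh xL xR} {T : ℝ} {k : ℕ}

lemma FE.sub {F F' H H' : ℝ → ℝ → ℝ} (hF : M.FE k T F F') (hH : M.FE k T H H') :
    M.FE k T (fun t x => F t x - H t x) (fun t x => F' t x - H' t x) := by
  intro n hn
  obtain ⟨c, c', hc, h⟩ := hF n hn
  obtain ⟨e, e', he, h2⟩ := hH n hn
  refine ⟨fun i t => c i t - e i t, fun i t => c' i t - e' i t, fun i =>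
    ⟨(hc i).1.sub (he i).1, (hc i).2.1.sub (he i).2.1, fun t ht =>
      ((hc i).2.2 t ht).sub ((he i).2.2 t ht)⟩, fun t ht x hx => ?_⟩
  simp only [(h t ht x hx).1, (h t ht x hx).2, (h2 t ht x hx).1, (h2 t ht x hx).2, sub_mul,
    Finset.sum_sub_distrib, and_self]

/-- Finite sums of products of differentiable coefficients and spatial profiles. -/
lemma TD.of_coeff {F F' : ℝ → ℝ → ℝ}
    (h : ∀ n < M.N, ∃ (c c' : ℕ → ℝ → ℝ) (φ : ℕ → ℝ → ℝ),
      (∀ i, ContinuousOn (c i) (Icc 0 T) ∧ ContinuousOn (c' i) (Icc 0 T) ∧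
        ∀ t ∈ Ioo 0 T, HasDerivAt (c i) (c' i t) t) ∧ (∀ i, Continuous (φ i)) ∧
      ∀ t ∈ Icc 0 T, ∀ x ∈ Ioo (M.pt n) (M.pt (n + 1)),
        F t x = ∑ i ∈ Finset.range (k + 1), c i t * φ i x ∧
        F' t x = ∑ i ∈ Finset.range (k + 1), c' i t * φ i x) : M.TD T F F' := by
  intro n hn
  obtain ⟨c, c', φ, hc, hφ, h⟩ := h n hn
  refine ⟨fun t x => ∑ i ∈ Finset.range (k + 1), c i t * φ i x,
    fun t x => ∑ i ∈ Finset.range (k + 1), c' i t * φ i x, ?_, ?_, ?_, h⟩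
  · refine continuousOn_finsetSum _ fun i _ => ContinuousOn.mul ?_ ?_
    · exact (hc i).1.comp (f := fun z : ℝ × ℝ => z.1) (by fun_prop) fun z hz => hz.1
    · exact ((hφ i).comp continuous_snd).continuousOn
  · refine continuousOn_finsetSum _ fun i _ => ContinuousOn.mul ?_ ?_
    · exact (hc i).2.1.comp (f := fun z : ℝ × ℝ => z.1) (by fun_prop) fun z hz => hz.1
    · exact ((hφ i).comp continuous_snd).continuousOn
  · intro t ht x _
    exact HasDerivAt.fun_sum fun i _ => ((hc i).2.2 t ht).mul_const _

lemma FE.td {F F' : ℝ → ℝ → ℝ} (hF : M.FE k T F F') : M.TD T F F' := by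
  refine TD.of_coeff (k := k) fun n hn => ?_
  obtain ⟨c, c', hc, h⟩ := hF n hn
  exact ⟨c, c', fun i x => x ^ i, hc, fun i => continuous_pow i, h⟩

/-- Elementwise spatial derivatives of such curves are again differentiable in time, and the two
derivatives commute. -/
lemma FE.td_deriv {F F' dF dF' : ℝ → ℝ → ℝ} (hF : M.FE k T F F')
    (h1 : ∀ t ∈ Icc 0 T, M.PiecewiseDeriv (F t) (dF t))
    (h2 : ∀ t ∈ Icc 0 T, M.PiecewiseDeriv (F' t) (dF' t)) : M.TD T dF dF' := by
  refine TD.of_coeff (k := k) fun n hn => ?_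
  obtain ⟨c, c', hc, h⟩ := hF n hn
  refine ⟨c, c', fun i x => i * x ^ (i - 1), hc, fun i => by fun_prop, fun t ht x hx => ?_⟩
  have key : ∀ (e : ℕ → ℝ), HasDerivAt (fun y => ∑ i ∈ Finset.range (k + 1), e i * y ^ i)
      (∑ i ∈ Finset.range (k + 1), e i * (i * x ^ (i - 1))) x := fun e =>
    HasDerivAt.fun_sum fun i _ => (hasDerivAt_pow i x).const_mul (e i)
  constructor
  · refine (h1 t ht n hn x hx).unique ((key fun i => c i t).congr_of_eventuallyEq ?_)
    filter_upwards [Ioo_mem_nhds hx.1 hx.2] with y hy using (h t ht y hy).1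
  · refine (h2 t ht n hn x hx).unique ((key fun i => c' i t).congr_of_eventuallyEq ?_)
    filter_upwards [Ioo_mem_nhds hx.1 hx.2] with y hy using (h t ht y hy).2

lemma FE.poly {F F' : ℝ → ℝ → ℝ} (hF : M.FE k T F F') {t : ℝ} (ht : t ∈ Icc 0 T) :
    M.PiecewisePoly k (F t) ∧ M.PiecewisePoly k (F' t) := by
  have key : ∀ e : ℕ → ℝ, ∃ P : Polynomial ℝ, P.natDegree ≤ k ∧
      ∀ x, ∑ i ∈ Finset.range (k + 1), e i * x ^ i = P.eval x := by
    intro e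
    refine ⟨∑ i ∈ Finset.range (k + 1), Polynomial.C (e i) * Polynomial.X ^ i, ?_, fun x => ?_⟩
    · exact Polynomial.natDegree_sum_le_of_forall_le _ _ fun i hi =>
        (Polynomial.natDegree_C_mul_X_pow_le _ _).trans (by simpa [Nat.lt_succ_iff] using hi)
    · simp [Polynomial.eval_finsetSum]
  constructor
  · intro n hn
    obtain ⟨c, c', hc, h⟩ := hF n hn
    obtain ⟨P, hP, hPe⟩ := key fun i => c i t
    exact ⟨P, hP, fun x hx => by rw [(h t ht x hx).1, hPe]⟩
  · intro n hn
    obtain ⟨c, c', hc, h⟩ := hF n hn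
    obtain ⟨P, hP, hPe⟩ := key fun i => c' i t
    exact ⟨P, hP, fun x hx => by rw [(h t ht x hx).2, hPe]⟩

/-- `L²`-projections onto `P_{k-1}(T_h)` of a curve and its time derivative: projecting commutes
with differentiation in time. -/
lemma FE.proj {F F' : ℝ → ℝ → ℝ} (hF : M.FE k T F F') :
    ∃ U U' : ℝ → ℝ → ℝ, M.TD T U U' ∧ ∀ t ∈ Icc 0 T,
      IsL2Proj M (k - 1) (F t) (U t) ∧ IsL2Proj M (k - 1) (F' t) (U' t) := by
  have hQ : ∀ n, ∃ Q : ℕ → Polynomial ℝ, n < M.N → ∀ i, (Q i).natDegree ≤ k - 1 ∧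
      ∀ j ≤ k - 1, momentL (M.pt n) (M.pt (n + 1)) j (Polynomial.X ^ i - Q i) = 0 := by
    intro n
    by_cases hn : n < M.N
    · choose Q hQ using fun i => exists_monomial_proj (M.mono n hn) (k - 1) i
      exact ⟨Q, fun _ => hQ⟩
    · exact ⟨fun _ => 0, fun h => absurd h hn⟩
  choose Q hQ using hQ
  choose! c c' hc h using hF
  have key : ∀ (e : ℕ → ℕ → ℝ) (v : ℝ → ℝ), M.PC v →
      (∀ n < M.N, ∀ x ∈ Ioo (M.pt n) (M.pt (n + 1)),
        v x = ∑ i ∈ Finset.range (k + 1), e n i * x ^ i) →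
      IsL2Proj M (k - 1) v
        (M.glue fun n x => ∑ i ∈ Finset.range (k + 1), e n i * (Q n i).eval x) := by
    intro e v hv hve
    have hpoly : M.PiecewisePoly (k - 1)
        (M.glue fun n x => ∑ i ∈ Finset.range (k + 1), e n i * (Q n i).eval x) := by
      intro n hn
      refine ⟨∑ i ∈ Finset.range (k + 1), e n i • Q n i, ?_, fun x hx => ?_⟩
      · exact Polynomial.natDegree_sum_le_of_forall_le _ _ fun i _ =>
          (Polynomial.natDegree_smul_le _ _).trans (hQ n hn i).1
      · rw [M.glue_eq _ hn hx]
        simp [Polynomial.eval_finsetSum]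
    refine ⟨hpoly, fun q hq => ?_⟩
    rw [← sub_eq_zero, ← inner2_sub_left hpoly.pc hv hq.pc, inner2,
      ((hpoly.pc.sub hv).mul hq.pc).integral_eq_sum]
    refine Finset.sum_eq_zero fun n hn => ?_
    have hn := Finset.mem_range.mp hn
    obtain ⟨R, hR, hqR⟩ := hq n hn
    have hD := integral_mul_of_moments (α := M.pt n) (β := M.pt (n + 1)) (k := k - 1)
      (D := ∑ i ∈ Finset.range (k + 1), e n i • (Polynomial.X ^ i - Q n i)) hR fun j hj => by
        rw [map_sum]
        refine Finset.sum_eq_zero fun i _ => ?_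
        rw [map_smul, (hQ n hn i).2 j hj, smul_zero]
    rw [← neg_eq_zero, ← intervalIntegral.integral_neg, ← hD]
    refine M.integral_elem_congr hn fun x hx => ?_
    simp only [M.glue_eq _ hn hx, hve n hn x hx, hqR x hx]
    simp only [Polynomial.eval_finsetSum, Polynomial.eval_smul, Polynomial.eval_sub,
      Polynomial.eval_pow, Polynomial.eval_X, smul_eq_mul, mul_sub, Finset.sum_sub_distrib]
    ring
  refine ⟨fun t => M.glue fun n x => ∑ i ∈ Finset.range (k + 1), c n i t * (Q n i).eval x,
    fun t => M.glue fun n x => ∑ i ∈ Finset.range (k + 1), c' n i t * (Q n i).eval x, ?_, ?_⟩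
  · refine TD.of_coeff (k := k) fun n hn => ⟨c n, c' n, fun i x => (Q n i).eval x,
      hc n hn, fun i => (Q n i).continuous, fun t ht x hx => ?_⟩
    exact ⟨M.glue_eq _ hn hx, M.glue_eq _ hn hx⟩
  · intro t ht
    have hFE : M.FE k T F F' := fun n hn => ⟨c n, c' n, hc n hn, h n hn⟩
    exact ⟨key (fun n i => c n i t) _ (hFE.poly ht).1.pc fun n hn x hx => (h n hn t ht x hx).1,
      key (fun n i => c' n i t) _ (hFE.poly ht).2.pc fun n hn x hx => (h n hn t ht x hx).2⟩

/-- Curves expanded in an arbitrary family of polynomials of degree at most `k`. -/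
lemma FE.of_expansion {F F' : ℝ → ℝ → ℝ}
    (h : ∀ n < M.N, ∃ (ψ : Fin (k + 1) → Polynomial ℝ) (l l' : Fin (k + 1) → ℝ → ℝ),
      (∀ j, (ψ j).natDegree ≤ k) ∧
      (∀ j, ContinuousOn (l j) (Icc 0 T) ∧ ContinuousOn (l' j) (Icc 0 T) ∧
        ∀ t ∈ Ioo 0 T, HasDerivAt (l j) (l' j t) t) ∧
      ∀ t ∈ Icc 0 T, ∀ x ∈ Ioo (M.pt n) (M.pt (n + 1)),
        F t x = ∑ j, l j t * (ψ j).eval x ∧ F' t x = ∑ j, l' j t * (ψ j).eval x) :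
    M.FE k T F F' := by
  intro n hn
  obtain ⟨ψ, l, l', hψ, hl, h⟩ := h n hn
  have key : ∀ (e : Fin (k + 1) → ℝ) (x : ℝ), ∑ j, e j * (ψ j).eval x =
      ∑ i ∈ Finset.range (k + 1), (∑ j, e j * (ψ j).coeff i) * x ^ i := by
    intro e x
    simp only [Finset.sum_mul]
    rw [Finset.sum_comm]
    refine Finset.sum_congr rfl fun j _ => ?_
    rw [Polynomial.eval_eq_sum_range' (Nat.lt_succ_of_le (hψ j)), Finset.mul_sum]
    exact Finset.sum_congr rfl fun i _ => by ring
  refine ⟨fun i t => ∑ j, l j t * (ψ j).coeff i, fun i t => ∑ j, l' j t * (ψ j).coeff i,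
    fun i => ⟨?_, ?_, ?_⟩, fun t ht x hx => ?_⟩
  · exact continuousOn_finsetSum _ fun j _ => (hl j).1.mul continuousOn_const
  · exact continuousOn_finsetSum _ fun j _ => (hl j).2.1.mul continuousOn_const
  · exact fun t ht => HasDerivAt.fun_sum fun j _ => ((hl j).2.2 t ht).mul_const _
  · rw [(h t ht x hx).1, (h t ht x hx).2, key, key]
    exact ⟨rfl, rfl⟩

/-- On a fixed element, piecewise polynomials of degree at most `k` are recovered from their values
at `k + 1` nodes; the nodes are equally spaced interior points, where the values are determined. -/
lemma exists_sampling (M : Mesh xL xR) (k : ℕ) {n : ℕ} (hn : n < M.N) :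
    ∃ (y : Fin (k + 1) → ℝ) (ψ : Fin (k + 1) → Polynomial ℝ),
      (∀ j, (ψ j).natDegree ≤ k) ∧
      ∀ F : ℝ → ℝ, M.PiecewisePoly k F → ∀ x ∈ Ioo (M.pt n) (M.pt (n + 1)),
        F x = ∑ j, F (y j) * (ψ j).eval x := by
  set α := M.pt n
  set β := M.pt (n + 1)
  have hαβ : α < β := M.mono n hn
  set y : Fin (k + 1) → ℝ := fun j => α + (β - α) * ((j : ℝ) + 1) / (k + 2) with hy
  have hpos : (0 : ℝ) < k + 2 := by positivity
  have hyI : ∀ j, y j ∈ Ioo α β := by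
    intro j
    have hj : (j : ℝ) + 1 < k + 2 := by
      have : (j : ℕ) + 1 < k + 2 := by omega
      exact_mod_cast this
    have hβα : 0 < β - α := by linarith
    constructor
    · have : 0 < (β - α) * ((j : ℝ) + 1) / (k + 2) := by positivity
      simp only [hy]
      linarith
    · have : (β - α) * ((j : ℝ) + 1) / (k + 2) < β - α := by
        rw [div_lt_iff₀ hpos]
        exact mul_lt_mul_of_pos_left hj hβα
      simp only [hy]
      linarith
  have hyinj : Function.Injective y := by
    intro i j hij
    have hβα : β - α ≠ 0 := by linarith
    simp only [hy, add_right_inj] at hij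
    rw [div_left_inj' hpos.ne'] at hij
    have := mul_left_cancel₀ hβα hij
    simp only [add_left_inj, Nat.cast_inj] at this
    exact Fin.ext this
  obtain ⟨ψ, hψ, -, hexp⟩ := exists_dual k (fun j => Polynomial.leval (y j)) fun P hP h =>
    Polynomial.eq_zero_of_natDegree_lt_card_of_eval_eq_zero P hyinj (fun j => h j) (by simp; omega)
  refine ⟨y, ψ, hψ, fun F hF x hx => ?_⟩
  obtain ⟨P, hP, hFP⟩ := hF n hn
  rw [hFP x hx]
  conv_lhs => rw [hexp P hP]
  simp only [Polynomial.eval_finsetSum, Polynomial.eval_smul, smul_eq_mul]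
  exact Finset.sum_congr rfl fun j _ => by rw [hFP _ (hyI j)]; rfl

/-- A pointwise differentiable curve of piecewise polynomials is differentiable as a curve in the
finite-dimensional space: its coefficients are linear combinations of point values. -/
lemma FE.of_pointwise {F F' : ℝ → ℝ → ℝ} (hT : 0 < T)
    (hF : ∀ t ∈ Icc 0 T, M.PiecewisePoly k (F t))
    (hd : ∀ t ∈ Icc 0 T, ∀ x, HasDerivWithinAt (fun s => F s x) (F' t x) (Icc 0 T) t)
    (hc : ∀ x, ContinuousOn (fun t => F' t x) (Icc 0 T)) : M.FE k T F F' := by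
  refine FE.of_expansion fun n hn => ?_
  obtain ⟨y, ψ, hψ, hexp⟩ := M.exists_sampling k hn
  refine ⟨ψ, fun j t => F t (y j), fun j t => F' t (y j), hψ, fun j => ⟨?_, hc _, ?_⟩,
    fun t ht x hx => ⟨hexp _ (hF t ht) x hx, ?_⟩⟩
  · exact fun t ht => (hd t ht (y j)).continuousWithinAt
  · exact fun t ht => (hd t (Ioo_subset_Icc_self ht) (y j)).hasDerivAt (Icc_mem_nhds ht.1 ht.2)
  · have h1 : HasDerivWithinAt (fun s => ∑ j, F s (y j) * (ψ j).eval x)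
        (∑ j, F' t (y j) * (ψ j).eval x) (Icc 0 T) t :=
      HasDerivWithinAt.fun_sum fun j _ => (hd t ht (y j)).mul_const _
    have h2 := h1.congr (fun s hs => hexp _ (hF s hs) x hx) (hexp _ (hF t ht) x hx)
    exact (uniqueDiffOn_Icc hT t ht).eq_deriv _ (hd t ht x) h2

/-- The time derivative of a curve of continuous piecewise polynomials is continuous up to the
boundary of each element. -/
lemma continuousOn_timeDeriv {F F' : ℝ → ℝ → ℝ} (hT : 0 < T)
    (hF : ∀ t ∈ Icc 0 T, M.PiecewisePoly k (F t))
    (hFc : ∀ t ∈ Icc 0 T, ContinuousOn (F t) (Icc xL xR))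
    (hd : ∀ t ∈ Icc 0 T, ∀ x, HasDerivWithinAt (fun s => F s x) (F' t x) (Icc 0 T) t)
    {t : ℝ} (ht : t ∈ Icc 0 T) {n : ℕ} (hn : n < M.N) :
    ContinuousOn (F' t) (Icc (M.pt n) (M.pt (n + 1))) := by
  obtain ⟨y, ψ, hψ, hexp⟩ := M.exists_sampling k hn
  have hFe : ∀ s ∈ Icc 0 T, ∀ x ∈ Icc (M.pt n) (M.pt (n + 1)),
      F s x = ∑ j, F s (y j) * (ψ j).eval x := by
    intro s hs
    refine EqOn.of_subset_closure (s := Ioo (M.pt n) (M.pt (n + 1))) (hexp _ (hF s hs))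
      ((hFc s hs).mono (M.Icc_subset hn)) (Continuous.continuousOn (by fun_prop))
      Ioo_subset_Icc_self ?_
    rw [closure_Ioo (M.mono n hn).ne]
  have : ContinuousOn (fun x => ∑ j, F' t (y j) * (ψ j).eval x)
      (Icc (M.pt n) (M.pt (n + 1))) := Continuous.continuousOn (by fun_prop)
  refine this.congr fun x hx => ?_
  have h1 : HasDerivWithinAt (fun s => ∑ j, F s (y j) * (ψ j).eval x)
      (∑ j, F' t (y j) * (ψ j).eval x) (Icc 0 T) t :=
    HasDerivWithinAt.fun_sum fun j _ => (hd t ht (y j)).mul_const _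
  exact (uniqueDiffOn_Icc hT t ht).eq_deriv _ (hd t ht x)
    (h1.congr (fun s hs => hFe s hs x hx) (hFe t ht x hx))

end Mesh

namespace Mesh

variable {xL xR : ℝ} {M : Mesh xL xR} {T : ℝ} {k : ℕ}

/-! ### The interpolation operator -/

/-- On each element the interpolant is determined by the left endpoint value and by moments of
its derivative; integrating by parts, the moments involve only values of `v` itself. -/
lemma interp_moments {v dv Iv dIv : ℝ → ℝ} (hk : 1 ≤ k) (hI : IsInterp M k v dv Iv dIv)
    (hv : ∀ x ∈ Icc xL xR, HasDerivWithinAt v (dv x) (Icc xL xR) x)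
    (hdv : ContinuousOn dv (Icc xL xR)) {n : ℕ} (hn : n < M.N) :
    ∃ P : Polynomial ℝ, P.natDegree ≤ k ∧
      (∀ x ∈ Ioo (M.pt n) (M.pt (n + 1)), Iv x = P.eval x) ∧ P.eval (M.pt n) = v (M.pt n) ∧
      ∀ j < k, momentL (M.pt n) (M.pt (n + 1)) j P.derivative =
        v (M.pt (n + 1)) * M.pt (n + 1) ^ j - v (M.pt n) * M.pt n ^ j -
          ∫ x in M.pt n..M.pt (n + 1), v x * (j * x ^ (j - 1)) := by
  obtain ⟨hpoly, hcont, hder, hnode, hmom⟩ := hI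
  have hlt := M.mono n hn
  have hsub := M.Icc_subset hn
  obtain ⟨P, hP, hIP⟩ := hpoly n hn
  have hEq : EqOn Iv (fun x => P.eval x) (Icc (M.pt n) (M.pt (n + 1))) := by
    refine EqOn.of_subset_closure (s := Ioo (M.pt n) (M.pt (n + 1))) hIP (hcont.mono hsub)
      P.continuous.continuousOn Ioo_subset_Icc_self ?_
    rw [closure_Ioo hlt.ne]
  have hvc : ContinuousOn v (Icc (M.pt n) (M.pt (n + 1))) := fun x hx =>
    ((hv x (hsub hx)).continuousWithinAt).mono hsub
  refine ⟨P, hP, hIP, ?_, fun j hj => ?_⟩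
  · rw [← hnode n hn.le]
    exact (hEq (left_mem_Icc.mpr hlt.le)).symm
  · have hd1 : M.PiecewisePoly (k - 1) dIv := hpoly.deriv hder
    have hX : ((Polynomial.X : Polynomial ℝ) ^ j).natDegree ≤ k - 1 := by
      rw [Polynomial.natDegree_X_pow]
      omega
    have h1 := M.inner2_indicator hn hX hd1.pc
    have h2 := M.inner2_indicator hn hX (PC.of_continuousOn hdv)
    have h3 := hmom _ h1.1
    rw [h1.2, h2.2] at h3
    have h4 : momentL (M.pt n) (M.pt (n + 1)) j P.derivative =
        ∫ x in M.pt n..M.pt (n + 1), dIv x * ((Polynomial.X : Polynomial ℝ) ^ j).eval x := by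
      refine (M.integral_elem_congr hn fun x hx => ?_).symm
      have : dIv x = P.derivative.eval x := by
        refine (hder n hn x hx).unique ((P.hasDerivAt x).congr_of_eventuallyEq ?_)
        filter_upwards [Ioo_mem_nhds hx.1 hx.2] with y hy using hIP y hy
      simp [this]
    rw [h4, h3]
    have hi1 : IntervalIntegrable (fun x => dv x * x ^ j) volume (M.pt n) (M.pt (n + 1)) := by
      refine ContinuousOn.intervalIntegrable ?_
      rw [uIcc_of_le hlt.le]
      exact (hdv.mono hsub).mul (by fun_prop)
    have hi2 : IntervalIntegrable (fun x => v x * (j * x ^ (j - 1))) volume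
        (M.pt n) (M.pt (n + 1)) := by
      refine ContinuousOn.intervalIntegrable ?_
      rw [uIcc_of_le hlt.le]
      exact hvc.mul (by fun_prop)
    have h5 := integral_eq_sub_of_hasDerivAt_of_le (f := fun x => v x * x ^ j)
      (f' := fun x => dv x * x ^ j + v x * (j * x ^ (j - 1))) hlt.le
      (hvc.mul (by fun_prop)) (fun x hx => by
        have hx' := M.Ioo_subset hn hx
        exact ((hv x (Ioo_subset_Icc_self hx')).hasDerivAt (Icc_mem_nhds hx'.1 hx'.2)).mul
          (hasDerivAt_pow j x)) (hi1.add hi2)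
    rw [intervalIntegral.integral_add hi1 hi2] at h5
    simp only [Polynomial.eval_pow, Polynomial.eval_X]
    linarith

/-- The functionals determining the interpolant on `[α,β]`: the value at `α` and the moments of
the derivative. -/
def interpL (α β : ℝ) (k : ℕ) : Fin (k + 1) → (Polynomial ℝ →ₗ[ℝ] ℝ) :=
  Fin.cases (Polynomial.leval α) fun j => (momentL α β j).comp Polynomial.derivative

lemma interpL_injective {α β : ℝ} (hαβ : α < β) (hk : 1 ≤ k) (P : Polynomial ℝ)
    (hP : P.natDegree ≤ k) (h : ∀ j, interpL α β k j P = 0) : P = 0 := by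
  have h1 : P.derivative = 0 := by
    refine eq_zero_of_moments hαβ (k := k - 1)
      ((Polynomial.natDegree_derivative_le P).trans (by omega)) fun j hj => ?_
    exact h (Fin.succ ⟨j, by omega⟩)
  have h2 := Polynomial.derivative_eq_zero.mp h1
  have h3 : P.eval α = 0 := h 0
  rw [Polynomial.eq_C_of_natDegree_eq_zero h2] at h3 ⊢
  simp only [Polynomial.eval_C] at h3
  simp [h3]

lemma interp_unique {v dv Iv dIv Jv dJv : ℝ → ℝ} (hk : 1 ≤ k) (hI : IsInterp M k v dv Iv dIv)
    (hJ : IsInterp M k v dv Jv dJv)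
    (hv : ∀ x ∈ Icc xL xR, HasDerivWithinAt v (dv x) (Icc xL xR) x)
    (hdv : ContinuousOn dv (Icc xL xR)) {n : ℕ} (hn : n < M.N) :
    EqOn Iv Jv (Ioo (M.pt n) (M.pt (n + 1))) := by
  obtain ⟨P, hP, hIP, hP0, hPj⟩ := interp_moments hk hI hv hdv hn
  obtain ⟨Q, hQ, hJQ, hQ0, hQj⟩ := interp_moments hk hJ hv hdv hn
  have h : P - Q = 0 := by
    refine interpL_injective (M.mono n hn) hk _
      ((Polynomial.natDegree_sub_le P Q).trans (max_le hP hQ)) fun j => ?_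
    rw [map_sub]
    refine Fin.cases ?_ (fun j => ?_) j
    · change P.eval _ - Q.eval _ = 0
      rw [hP0, hQ0, sub_self]
    · change momentL _ _ j P.derivative - momentL _ _ j Q.derivative = 0
      rw [hPj j j.2, hQj j j.2, sub_self]
  intro x hx
  rw [hIP x hx, hJQ x hx, sub_eq_zero.mp h]

/-- Interpolation commutes with differentiation in time. -/
lemma FE.of_interp {v v' vx vx' Iv dIv Iv' dIv' : ℝ → ℝ → ℝ} (hT : 0 < T) (hk : 1 ≤ k)
    (hd : ∀ t ∈ Icc 0 T, ∀ x ∈ Icc xL xR, HasDerivWithinAt (fun s => v s x) (v' t x) (Icc 0 T) t)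
    (hx : ∀ t ∈ Icc 0 T, ∀ x ∈ Icc xL xR, HasDerivWithinAt (v t) (vx t x) (Icc xL xR) x)
    (hx' : ∀ t ∈ Icc 0 T, ∀ x ∈ Icc xL xR, HasDerivWithinAt (v' t) (vx' t x) (Icc xL xR) x)
    (hv : ContinuousOn (fun z : ℝ × ℝ => v z.1 z.2) (Icc 0 T ×ˢ Icc xL xR))
    (hv' : ContinuousOn (fun z : ℝ × ℝ => v' z.1 z.2) (Icc 0 T ×ˢ Icc xL xR))
    (hvx : ContinuousOn (fun z : ℝ × ℝ => vx z.1 z.2) (Icc 0 T ×ˢ Icc xL xR))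
    (hvx' : ContinuousOn (fun z : ℝ × ℝ => vx' z.1 z.2) (Icc 0 T ×ˢ Icc xL xR))
    (hI : ∀ t ∈ Icc 0 T, IsInterp M k (v t) (vx t) (Iv t) (dIv t))
    (hI' : ∀ t ∈ Icc 0 T, IsInterp M k (v' t) (vx' t) (Iv' t) (dIv' t)) :
    M.FE k T Iv Iv' := by
  refine FE.of_expansion fun n hn => ?_
  set α := M.pt n with hα
  set β := M.pt (n + 1) with hβ
  have hαβ : α < β := M.mono n hn
  have hsub : Icc α β ⊆ Icc xL xR := M.Icc_subset hn
  have hαm : α ∈ Icc xL xR := hsub (left_mem_Icc.mpr hαβ.le)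
  have hβm : β ∈ Icc xL xR := hsub (right_mem_Icc.mpr hαβ.le)
  obtain ⟨ψ, hψ, -, hexp⟩ := exists_dual k (interpL α β k) (interpL_injective hαβ hk)
  -- the functionals expressed through values of the interpolated function
  let lam : (ℝ → ℝ → ℝ) → Fin (k + 1) → ℝ → ℝ := fun w j t =>
    Fin.cases (motive := fun _ => ℝ) (w t α) (fun j : Fin k => w t β * β ^ (j : ℕ) -
      w t α * α ^ (j : ℕ) - ∫ x in α..β, w t x * ((j : ℕ) * x ^ ((j : ℕ) - 1))) j
  have hslice : ∀ {w : ℝ → ℝ → ℝ},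
      ContinuousOn (fun z : ℝ × ℝ => w z.1 z.2) (Icc 0 T ×ˢ Icc xL xR) →
      ∀ x ∈ Icc xL xR, ContinuousOn (fun t => w t x) (Icc 0 T) := fun hw x hx =>
    hw.comp (f := fun t => (t, x)) (by fun_prop) fun t ht => ⟨ht, hx⟩
  have hprod : ∀ {w : ℝ → ℝ → ℝ} (j : ℕ),
      ContinuousOn (fun z : ℝ × ℝ => w z.1 z.2) (Icc 0 T ×ˢ Icc xL xR) →
      ContinuousOn (fun z : ℝ × ℝ => w z.1 z.2 * (j * z.2 ^ (j - 1))) (Icc 0 T ×ˢ Icc α β) :=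
    fun j hw => (hw.mono (prod_mono_right hsub)).mul (Continuous.continuousOn (by fun_prop))
  have hlamc : ∀ {w : ℝ → ℝ → ℝ},
      ContinuousOn (fun z : ℝ × ℝ => w z.1 z.2) (Icc 0 T ×ˢ Icc xL xR) →
      ∀ j, ContinuousOn (lam w j) (Icc 0 T) := by
    intro w hw j
    refine Fin.cases (hslice hw α hαm) (fun j => ?_) j
    refine (((hslice hw β hβm).mul continuousOn_const).sub
      ((hslice hw α hαm).mul continuousOn_const)).sub ?_
    exact continuousOn_integral_param (G := fun t x => w t x * ((j : ℕ) * x ^ ((j : ℕ) - 1)))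
      hT.le hαβ.le (hprod j hw)
  have hlamI : ∀ {w wx Iw dIw : ℝ → ℝ → ℝ}
      (_ : ∀ t ∈ Icc 0 T, ∀ x ∈ Icc xL xR, HasDerivWithinAt (w t) (wx t x) (Icc xL xR) x)
      (_ : ContinuousOn (fun z : ℝ × ℝ => wx z.1 z.2) (Icc 0 T ×ˢ Icc xL xR))
      (_ : ∀ t ∈ Icc 0 T, IsInterp M k (w t) (wx t) (Iw t) (dIw t)),
      ∀ t ∈ Icc 0 T, ∀ x ∈ Ioo α β, Iw t x = ∑ j, lam w j t * (ψ j).eval x := by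
    intro w wx Iw dIw h1 h2 h3 t ht x hx
    obtain ⟨P, hP, hIP, hP0, hPj⟩ := interp_moments hk (h3 t ht) (h1 t ht)
      (h2.comp (f := fun x => (t, x)) (by fun_prop) fun x hx => ⟨ht, hx⟩) hn
    rw [hIP x hx]
    conv_lhs => rw [hexp P hP]
    simp only [Polynomial.eval_finsetSum, Polynomial.eval_smul, smul_eq_mul]
    refine Finset.sum_congr rfl fun j _ => ?_
    congr 1
    exact Fin.cases hP0 (fun j => hPj j j.2) j
  refine ⟨ψ, lam v, lam v', hψ, fun j => ⟨hlamc hv j, hlamc hv' j, fun t ht => ?_⟩,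
    fun t ht x hxm => ⟨hlamI hx hvx hI t ht x hxm, hlamI hx' hvx' hI' t ht x hxm⟩⟩
  have hdA : ∀ s ∈ Ioo 0 T, ∀ x ∈ Icc xL xR, HasDerivAt (fun s => v s x) (v' s x) s :=
    fun s hs x hx => (hd s (Ioo_subset_Icc_self hs) x hx).hasDerivAt (Icc_mem_nhds hs.1 hs.2)
  refine Fin.cases (hdA t ht α hαm) (fun j => ?_) j
  refine (((hdA t ht β hβm).mul_const _).sub ((hdA t ht α hαm).mul_const _)).sub ?_
  exact hasDerivAt_integral_param (G := fun t x => v t x * ((j : ℕ) * x ^ ((j : ℕ) - 1)))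
    (G' := fun t x => v' t x * ((j : ℕ) * x ^ ((j : ℕ) - 1))) hαβ.le (hprod j hv) (hprod j hv')
    (fun s hs x hx => (hdA s hs x (hsub hx)).mul_const _) ht

end Mesh

/-! ### Elementwise approximation by the projection -/

lemma poly_poincare {α β : ℝ} (hαβ : α ≤ β) (P : Polynomial ℝ) :
    ∫ x in α..β, (P.eval x - P.eval α) ^ 2 ≤
      (β - α) ^ 2 * ∫ x in α..β, P.derivative.eval x ^ 2 := by
  set K := ∫ x in α..β, P.derivative.eval x ^ 2 with hK
  have hint : ∀ (Q : Polynomial ℝ) (y z : ℝ),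
      IntervalIntegrable (fun x => Q.eval x) volume y z :=
    fun Q y z => Q.continuous.intervalIntegrable y z
  have hpt : ∀ x ∈ Icc α β, (P.eval x - P.eval α) ^ 2 ≤ (β - α) * K := by
    intro x hx
    rcases eq_or_lt_of_le hx.1 with h | h
    · subst h
      have : 0 ≤ K := integral_nonneg hαβ fun y _ => sq_nonneg _
      simpa using mul_nonneg (sub_nonneg.mpr hαβ) this
    · set δ := P.eval x - P.eval α with hδ
      set J := ∫ y in α..x, P.derivative.eval y ^ 2 with hJ
      have hFTC : ∫ y in α..x, P.derivative.eval y = δ :=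
        integral_eq_sub_of_hasDerivAt (fun y _ => P.hasDerivAt y) (hint _ _ _)
      -- Cauchy–Schwarz, from the variance of `P'` on `[α, x]`
      have h0 : 0 ≤ ∫ y in α..x, ((x - α) * P.derivative.eval y - δ) ^ 2 :=
        integral_nonneg hx.1 fun y _ => sq_nonneg _
      have h1 : ∫ y in α..x, ((x - α) * P.derivative.eval y - δ) ^ 2 =
          (x - α) ^ 2 * J - 2 * (x - α) * δ * δ + δ ^ 2 * (x - α) := by
        have e : ∀ y, ((x - α) * P.derivative.eval y - δ) ^ 2 =
            ((x - α) ^ 2 * P.derivative.eval y ^ 2 -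
              (2 * (x - α) * δ) * P.derivative.eval y) + δ ^ 2 := fun y => by ring
        simp only [e]
        rw [intervalIntegral.integral_add (Continuous.intervalIntegrable (by fun_prop) _ _)
          (Continuous.intervalIntegrable (by fun_prop) _ _),
          intervalIntegral.integral_sub (Continuous.intervalIntegrable (by fun_prop) _ _)
          (Continuous.intervalIntegrable (by fun_prop) _ _),
          intervalIntegral.integral_const_mul, intervalIntegral.integral_const_mul, hFTC,
          intervalIntegral.integral_const, smul_eq_mul]
        ring
      have hxα : 0 < x - α := by linarith
      have h2 : δ ^ 2 ≤ (x - α) * J := by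
        rw [h1] at h0
        by_contra! hc
        nlinarith
      have h3 : J ≤ K := by
        refine integral_mono_interval le_rfl hx.1 hx.2 ?_
          (Continuous.intervalIntegrable (by fun_prop) _ _)
        exact Filter.Eventually.of_forall fun y => sq_nonneg _
      have h4 : 0 ≤ J := integral_nonneg hx.1 fun y _ => sq_nonneg _
      calc δ ^ 2 ≤ (x - α) * J := h2
        _ ≤ (β - α) * K := by
            apply mul_le_mul _ h3 h4 (by linarith)
            linarith [hx.2]
  calc ∫ x in α..β, (P.eval x - P.eval α) ^ 2 ≤ ∫ _ in α..β, (β - α) * K :=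
        integral_mono_on hαβ (Continuous.intervalIntegrable (by fun_prop) _ _)
          (Continuous.intervalIntegrable (by fun_prop) _ _) hpt
    _ = _ := by
        rw [intervalIntegral.integral_const, smul_eq_mul]
        ring

namespace Mesh

variable {xL xR : ℝ} {M : Mesh xL xR} {T : ℝ} {k : ℕ}

/-- `‖v‖² ≤ ‖π v‖² + h² ‖∂ₓ v‖²` for piecewise polynomials, since the projection error is at most
the distance to a piecewise constant. -/
lemma norm_le_proj {v dv V : ℝ → ℝ} (hv : M.PiecewisePoly k v) (hdv : M.PiecewiseDeriv v dv)
    (hV : IsL2Proj M (k - 1) v V) :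
    inner2 xL xR v v ≤ inner2 xL xR V V + M.hsize ^ 2 * inner2 xL xR dv dv := by
  choose! P hP hvP using hv
  have hpv : M.PiecewisePoly k v := fun n hn => ⟨P n, hP n hn, hvP n hn⟩
  have hdP : ∀ n < M.N, ∀ x ∈ Ioo (M.pt n) (M.pt (n + 1)), dv x = (P n).derivative.eval x := by
    intro n hn x hx
    refine (hdv n hn x hx).unique (((P n).hasDerivAt x).congr_of_eventuallyEq ?_)
    filter_upwards [Ioo_mem_nhds hx.1 hx.2] with y hy using hvP n hn y hy
  set c : ℝ → ℝ := M.glue fun n _ => (P n).eval (M.pt n) with hc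
  have hcp : M.PiecewisePoly (k - 1) c := fun n hn =>
    ⟨Polynomial.C ((P n).eval (M.pt n)), by simp, fun x hx => by
      rw [hc, M.glue_eq _ hn hx, Polynomial.eval_C]⟩
  have hdvp := hpv.deriv hdv
  have h1 : inner2 xL xR (fun x => v x - c x) (fun x => v x - c x) ≤
      M.hsize ^ 2 * inner2 xL xR dv dv := by
    rw [inner2, inner2, ((hpv.pc.sub hcp.pc).mul (hpv.pc.sub hcp.pc)).integral_eq_sum,
      (hdvp.pc.mul hdvp.pc).integral_eq_sum, Finset.mul_sum]
    refine Finset.sum_le_sum fun n hn => ?_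
    have hn := Finset.mem_range.mp hn
    have hlt := M.mono n hn
    rw [M.integral_elem_congr hn (v := fun x => (v x - c x) * (v x - c x))
      (w := fun x => ((P n).eval x - (P n).eval (M.pt n)) ^ 2)
      fun x hx => by simp only [hvP n hn x hx, hc, M.glue_eq _ hn hx, pow_two],
      M.integral_elem_congr hn (v := fun x => dv x * dv x)
      (w := fun x => (P n).derivative.eval x ^ 2)
      fun x hx => by simp only [hdP n hn x hx, pow_two]]
    refine (poly_poincare hlt.le (P n)).trans (mul_le_mul_of_nonneg_right ?_ ?_)
    · exact pow_le_pow_left₀ (by linarith) (M.elem_le_hsize hn) 2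
    · exact integral_nonneg hlt.le fun y _ => sq_nonneg _
  have h2 : inner2 xL xR (fun x => v x - c x) (fun x => v x - c x) =
      inner2 xL xR v v - 2 * inner2 xL xR v c + inner2 xL xR c c := by
    rw [inner2_sub_left hpv.pc hcp.pc (hpv.pc.sub hcp.pc), inner2_comm v, inner2_comm c,
      inner2_sub_left hpv.pc hcp.pc hpv.pc, inner2_sub_left hpv.pc hcp.pc hcp.pc, inner2_comm c v]
    ring
  have h3 := hV.2 c hcp
  have h4 := inner2_young hV.1.pc hcp.pc one_pos
  simp only [inv_one, one_mul] at h4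
  linarith

lemma PiecewisePoly.piecewiseDeriv {v : ℝ → ℝ} (hv : M.PiecewisePoly k v) :
    M.PiecewiseDeriv v (_root_.deriv v) := by
  intro n hn x hx
  obtain ⟨P, -, hvP⟩ := hv n hn
  refine DifferentiableAt.hasDerivAt
    (((P.hasDerivAt x).congr_of_eventuallyEq ?_).differentiableAt)
  filter_upwards [Ioo_mem_nhds hx.1 hx.2] with y hy using hvP y hy

/-! ### Energy estimates -/

/-- Integration by parts for continuous piecewise polynomials, one of which vanishes at the
boundary. -/
lemma inner2_parts {u w du dw : ℝ → ℝ} (hu : M.PiecewisePoly k u) (hw : M.PiecewisePoly k w)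
    (hdu : M.PiecewiseDeriv u du) (hdw : M.PiecewiseDeriv w dw)
    (huc : ∀ n < M.N, ContinuousOn u (Icc (M.pt n) (M.pt (n + 1))))
    (hwc : ∀ n < M.N, ContinuousOn w (Icc (M.pt n) (M.pt (n + 1))))
    (hL : u xL = 0) (hR : u xR = 0) : inner2 xL xR dw u + inner2 xL xR du w = 0 := by
  have h1 := (hw.deriv hdw).pc.mul hu.pc
  have h2 := (hu.deriv hdu).pc.mul hw.pc
  rw [inner2, inner2, ← intervalIntegral.integral_add h1.intInt h2.intInt,
    (h1.add h2).integral_eq_sum]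
  have : ∀ n ∈ Finset.range M.N, ∫ x in M.pt n..M.pt (n + 1), (dw x * u x + du x * w x) =
      u (M.pt (n + 1)) * w (M.pt (n + 1)) - u (M.pt n) * w (M.pt n) := by
    intro n hn
    have hn := Finset.mem_range.mp hn
    refine integral_eq_sub_of_hasDerivAt_of_le (f := fun x => u x * w x) (M.mono n hn).le
      ((huc n hn).mul (hwc n hn)) (fun x hx => ?_) ((h1.add h2).intInt_elem hn)
    exact ((hdu n hn x hx).mul (hdw n hn x hx)).congr_deriv (by ring)
  rw [Finset.sum_congr rfl this, Finset.sum_range_sub (fun n => u (M.pt n) * w (M.pt n)),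
    M.left, M.right, hL, hR]
  simp

/-- The energy `a ‖π u‖² + b ‖π w‖²` of a curve satisfying the semidiscrete system with residuals
`ρp`, `ρm`.  Testing with the projections `π u`, `π w` is what makes the inexact time-derivative
terms symmetric, while `(∂ₓ w, π u) = (∂ₓ w, u)`. -/
lemma energy {a b : ℝ} {d : ℝ → ℝ} {u u' w w' du dw ρp ρm : ℝ → ℝ → ℝ} (hT : 0 < T)
    (ha : 0 < a) (hb : 0 < b) (hd : M.PiecewisePoly 0 d) (hd0 : ∀ x ∈ Icc xL xR, 0 ≤ d x)
    (hu : M.FE k T u u') (hw : M.FE k T w w')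
    (hdu : ∀ t ∈ Icc 0 T, M.PiecewiseDeriv (u t) (du t))
    (hdw : ∀ t ∈ Icc 0 T, M.PiecewiseDeriv (w t) (dw t))
    (huc : ∀ t ∈ Icc 0 T, ∀ n < M.N, ContinuousOn (u t) (Icc (M.pt n) (M.pt (n + 1))))
    (hwc : ∀ t ∈ Icc 0 T, ∀ n < M.N, ContinuousOn (w t) (Icc (M.pt n) (M.pt (n + 1))))
    (hbc : ∀ t ∈ Icc 0 T, u t xL = 0 ∧ u t xR = 0)
    (hρp : M.PJ T ρp) (hρm : M.PJ T ρm)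
    (eq1 : ∀ t ∈ Ioo 0 T, ∀ q, M.PiecewisePoly (k - 1) q →
      a * inner2 xL xR (u' t) q + inner2 xL xR (dw t) q = inner2 xL xR (ρp t) q)
    (eq2 : ∀ t ∈ Ioo 0 T, ∀ q, M.PiecewisePoly (k - 1) q →
      b * inner2 xL xR (w' t) q + inner2 xL xR (du t) q +
        inner2 xL xR (w t) (fun x => d x * q x) = inner2 xL xR (ρm t) q) :
    ∃ U W : ℝ → ℝ → ℝ,
      (∀ t ∈ Icc 0 T, IsL2Proj M (k - 1) (u t) (U t) ∧ IsL2Proj M (k - 1) (w t) (W t)) ∧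
      ∀ t ∈ Icc 0 T, a * inner2 xL xR (U t) (U t) + b * inner2 xL xR (W t) (W t) ≤
        3 * ((a * inner2 xL xR (U 0) (U 0) + b * inner2 xL xR (W 0) (W 0)) +
          (1 + T) * ∫ s in (0 : ℝ)..t, (a⁻¹ * inner2 xL xR (ρp s) (ρp s) +
            b⁻¹ * inner2 xL xR (ρm s) (ρm s))) := by
  obtain ⟨U, U', hUT, hU⟩ := hu.proj
  obtain ⟨W, W', hWT, hW⟩ := hw.proj
  have hlt := M.lt
  have nn : ∀ v, 0 ≤ inner2 xL xR v v := inner2_self_nonneg hlt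
  refine ⟨U, W, fun t ht => ⟨(hU t ht).1, (hW t ht).1⟩, fun t ht => ?_⟩
  refine gronwall_rate hT
    (G := fun t => a * inner2 xL xR (U t) (U t) + b * inner2 xL xR (W t) (W t))
    (G' := fun t => a * (2 * inner2 xL xR (U' t) (U t)) + b * (2 * inner2 xL xR (W' t) (W t)))
    (r := fun s => a⁻¹ * inner2 xL xR (ρp s) (ρp s) + b⁻¹ * inner2 xL xR (ρm s) (ρm s))
    ?_ ?_ ?_ ?_ ?_ ?_ ht
  · exact ((hUT.left.continuousOn_inner2 hT.le).const_smul a).add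
      ((hWT.left.continuousOn_inner2 hT.le).const_smul b)
  · exact fun s hs => ((hUT.hasDerivAt_inner2_self hs).const_mul a).add
      ((hWT.hasDerivAt_inner2_self hs).const_mul b)
  · exact ((hρp.continuousOn_inner2 hT.le).const_smul a⁻¹).add
      ((hρm.continuousOn_inner2 hT.le).const_smul b⁻¹)
  · exact fun s _ => add_nonneg (mul_nonneg (inv_nonneg.mpr ha.le) (nn _))
      (mul_nonneg (inv_nonneg.mpr hb.le) (nn _))
  · exact add_nonneg (mul_nonneg ha.le (nn _)) (mul_nonneg hb.le (nn _))
  · intro s hs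
    have hs' := Ioo_subset_Icc_self hs
    obtain ⟨⟨hU1, hU2⟩, -, hU4⟩ := hU s hs'
    obtain ⟨⟨hW1, hW2⟩, -, hW4⟩ := hW s hs'
    have hup := (hu.poly hs').1
    have hwp := (hw.poly hs').1
    have hdup := hup.deriv (hdu s hs')
    have hdwp := hwp.deriv (hdw s hs')
    have e1 := eq1 s hs _ hU1
    have e2 := eq2 s hs _ hW1
    rw [← hU4 _ hU1, inner2_comm (dw s), hU2 _ hdwp, inner2_comm (u s)] at e1
    rw [← hW4 _ hW1, inner2_comm (du s), hW2 _ hdup, inner2_comm (w s) (du s),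
      ← hW2 _ (PiecewisePoly.mul_const hd hW1)] at e2
    have hp := inner2_parts hup hwp (hdu s hs') (hdw s hs') (huc s hs') (hwc s hs')
      (hbc s hs').1 (hbc s hs').2
    have hdiss : 0 ≤ inner2 xL xR (W s) (fun x => d x * W s x) := by
      refine integral_nonneg hlt.le fun x hx => ?_
      have := mul_nonneg (hd0 x hx) (mul_self_nonneg (W s x))
      linarith
    have hτ : 0 < 1 + T := by linarith
    have y1 := inner2_young (hρp.pc hs') hU1.pc (c := (1 + T) * a⁻¹) (by positivity)
    have y2 := inner2_young (hρm.pc hs') hW1.pc (c := (1 + T) * b⁻¹) (by positivity)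
    rw [mul_inv, inv_inv] at y1 y2
    linarith

/-- If a residual is differentiable in time then its weighted squared norm is controlled by its
initial value and its time derivative. -/
lemma residual_bound {a b : ℝ} {ρp ρp' ρm ρm' : ℝ → ℝ → ℝ} (hT : 0 < T) (ha : 0 < a) (hb : 0 < b)
    (hρp : M.TD T ρp ρp') (hρm : M.TD T ρm ρm') {t : ℝ} (ht : t ∈ Icc 0 T) :
    a⁻¹ * inner2 xL xR (ρp t) (ρp t) + b⁻¹ * inner2 xL xR (ρm t) (ρm t) ≤
      3 * ((a⁻¹ * inner2 xL xR (ρp 0) (ρp 0) + b⁻¹ * inner2 xL xR (ρm 0) (ρm 0)) +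
        (1 + T) * ∫ s in (0 : ℝ)..t, (a⁻¹ * inner2 xL xR (ρp' s) (ρp' s) +
          b⁻¹ * inner2 xL xR (ρm' s) (ρm' s))) := by
  have nn : ∀ v, 0 ≤ inner2 xL xR v v := inner2_self_nonneg M.lt
  refine gronwall_rate hT
    (G := fun t => a⁻¹ * inner2 xL xR (ρp t) (ρp t) + b⁻¹ * inner2 xL xR (ρm t) (ρm t))
    (G' := fun t => a⁻¹ * (2 * inner2 xL xR (ρp' t) (ρp t)) +
      b⁻¹ * (2 * inner2 xL xR (ρm' t) (ρm t)))
    (r := fun s => a⁻¹ * inner2 xL xR (ρp' s) (ρp' s) + b⁻¹ * inner2 xL xR (ρm' s) (ρm' s))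
    ?_ ?_ ?_ ?_ ?_ ?_ ht
  · exact ((hρp.left.continuousOn_inner2 hT.le).const_smul a⁻¹).add
      ((hρm.left.continuousOn_inner2 hT.le).const_smul b⁻¹)
  · exact fun s hs => ((hρp.hasDerivAt_inner2_self hs).const_mul a⁻¹).add
      ((hρm.hasDerivAt_inner2_self hs).const_mul b⁻¹)
  · exact ((hρp.right.continuousOn_inner2 hT.le).const_smul a⁻¹).add
      ((hρm.right.continuousOn_inner2 hT.le).const_smul b⁻¹)
  · exact fun s _ => add_nonneg (mul_nonneg (inv_nonneg.mpr ha.le) (nn _))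
      (mul_nonneg (inv_nonneg.mpr hb.le) (nn _))
  · exact add_nonneg (mul_nonneg (inv_nonneg.mpr ha.le) (nn _))
      (mul_nonneg (inv_nonneg.mpr hb.le) (nn _))
  · intro s hs
    have hs' := Ioo_subset_Icc_self hs
    have hτ : 0 < 1 + T := by linarith
    have y1 := inner2_young (hρp.right.pc hs') (hρp.left.pc hs') hτ
    have y2 := inner2_young (hρm.right.pc hs') (hρm.left.pc hs') hτ
    have z1 := mul_le_mul_of_nonneg_left y1 (inv_nonneg.mpr ha.le)
    have z2 := mul_le_mul_of_nonneg_left y2 (inv_nonneg.mpr hb.le)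
    linarith

end Mesh

/-! ### Stability of the error system -/

namespace Mesh

variable {xL xR : ℝ} {M : Mesh xL xR} {T : ℝ} {k : ℕ}

lemma inner2_young_neg {u v : ℝ → ℝ} (hu : M.PC u) (hv : M.PC v) {c : ℝ} (hc : 0 < c) :
    -(2 * inner2 xL xR u v) ≤ c * inner2 xL xR u u + c⁻¹ * inner2 xL xR v v := by
  have h := inner2_young (hu.cmul (-1)) hv hc
  rw [inner2_cmul_left, inner2_cmul_left, inner2_comm u (fun x => -1 * u x),
    inner2_cmul_left] at h
  linarith

lemma inner2_zero_left {v : ℝ → ℝ}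
    (h : ∀ n < M.N, EqOn v (fun _ => 0) (Ioo (M.pt n) (M.pt (n + 1)))) (q : ℝ → ℝ) :
    inner2 xL xR v q = 0 := by
  have : inner2 xL xR v q = ∫ x in xL..xR, (0 : ℝ) :=
    PC.integral_congr (M := M) (PC.const 0) fun n hn x hx => by simp [h n hn hx]
  simpa using this

lemma PiecewiseDeriv.eq_zero {v dv : ℝ → ℝ} (hdv : M.PiecewiseDeriv v dv)
    (h : ∀ n < M.N, EqOn v (fun _ => 0) (Ioo (M.pt n) (M.pt (n + 1)))) :
    ∀ n < M.N, EqOn dv (fun _ => 0) (Ioo (M.pt n) (M.pt (n + 1))) := by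
  intro n hn x hx
  refine (hdv n hn x hx).unique ((hasDerivAt_const x (0 : ℝ)).congr_of_eventuallyEq ?_)
  filter_upwards [Ioo_mem_nhds hx.1 hx.2] with y hy using h n hn hy

lemma inner2_dmul_le {d W : ℝ → ℝ} {D : ℝ} (hd : M.PiecewisePoly 0 d)
    (hd0 : ∀ x ∈ Icc xL xR, 0 ≤ d x ∧ d x ≤ D) (hW : M.PC W) :
    inner2 xL xR (fun x => d x * W x) (fun x => d x * W x) ≤ D ^ 2 * inner2 xL xR W W := by
  have h := PC.integral_mono ((hd.pc.mul hW).mul (hd.pc.mul hW)) ((hW.mul hW).cmul (D ^ 2))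
    fun n hn x hx => by
      obtain ⟨h0, h1⟩ := hd0 x (Ioo_subset_Icc_self (M.Ioo_subset hn hx))
      have : d x ^ 2 ≤ D ^ 2 := pow_le_pow_left₀ h0 h1 2
      nlinarith [mul_self_nonneg (W x)]
  rwa [intervalIntegral.integral_const_mul] at h

/-- Testing the error equations with the spatial derivatives bounds the latter by the residuals,
the projections `V`, `Z` of the time derivatives, and the projection `W` of `w`. -/
lemma deriv_bound {a b D : ℝ} {d u' w w' du dw ρp ρm V W Z : ℝ → ℝ}
    (ha : 0 < a) (hb : 0 < b) (hd : M.PiecewisePoly 0 d)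
    (hd0 : ∀ x ∈ Icc xL xR, 0 ≤ d x ∧ d x ≤ D)
    (hdu : M.PiecewisePoly (k - 1) du) (hdw : M.PiecewisePoly (k - 1) dw)
    (hρp : M.PC ρp) (hρm : M.PC ρm)
    (hV : IsL2Proj M (k - 1) u' V) (hW : IsL2Proj M (k - 1) w W) (hZ : IsL2Proj M (k - 1) w' Z)
    (eq1 : ∀ q, M.PiecewisePoly (k - 1) q →
      a * inner2 xL xR u' q + inner2 xL xR dw q = inner2 xL xR ρp q)
    (eq2 : ∀ q, M.PiecewisePoly (k - 1) q →
      b * inner2 xL xR w' q + inner2 xL xR du q +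
        inner2 xL xR w (fun x => d x * q x) = inner2 xL xR ρm q) :
    inner2 xL xR du du + inner2 xL xR dw dw ≤
      3 * (inner2 xL xR ρp ρp + inner2 xL xR ρm ρm + a ^ 2 * inner2 xL xR V V +
        b ^ 2 * inner2 xL xR Z Z + D ^ 2 * inner2 xL xR W W) := by
  have nn : ∀ v, 0 ≤ inner2 xL xR v v := inner2_self_nonneg M.lt
  have e1 := eq1 _ hdw
  have e2 := eq2 _ hdu
  rw [← hV.2 _ hdw] at e1
  rw [← hZ.2 _ hdu, ← hW.2 _ (PiecewisePoly.mul_const hd hdu)] at e2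
  have e3 : inner2 xL xR W (fun x => d x * du x) = inner2 xL xR (fun x => d x * W x) du := by
    unfold inner2
    congr 1
    ext x
    ring
  have y1 := inner2_young hρp hdw.pc (c := 2) two_pos
  have y2 := inner2_young_neg hV.1.pc hdw.pc (c := 2 * a) (by positivity)
  have y3 := inner2_young hρm hdu.pc (c := 3) three_pos
  have y4 := inner2_young_neg hZ.1.pc hdu.pc (c := 3 * b) (by positivity)
  have y5 := inner2_young_neg (hd.pc.mul hW.1.pc) hdu.pc (c := 3) three_pos
  have y6 := inner2_dmul_le hd hd0 hW.1.pc
  have z2 := mul_le_mul_of_nonneg_left y2 ha.le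
  have z4 := mul_le_mul_of_nonneg_left y4 hb.le
  have a2 : a * ((2 * a)⁻¹ * inner2 xL xR dw dw) = 2⁻¹ * inner2 xL xR dw dw := by
    field_simp
  have b2 : b * ((3 * b)⁻¹ * inner2 xL xR du du) = 3⁻¹ * inner2 xL xR du du := by
    field_simp
  rw [mul_add, a2] at z2
  rw [mul_add, b2] at z4
  rw [e3] at e2
  have n1 := nn ρp
  have n2 := mul_nonneg (sq_nonneg a) (nn V)
  linarith

/-- Stability: the energy estimate is applied to the error and, after differentiating the error
equations in time, to its time derivative.  The first controls the projected error, the second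
the spatial derivatives of the error, and hence `‖e - π e‖ ≤ h ‖∂ₓ e‖`. -/
lemma stability {a b D : ℝ} {d : ℝ → ℝ} {u u' u'' w w' w'' du dw ρp ρp' ρm ρm' : ℝ → ℝ → ℝ}
    (hT : 0 < T)
    (ha : 0 < a) (hb : 0 < b) (hd : M.PiecewisePoly 0 d)
    (hd0 : ∀ x ∈ Icc xL xR, 0 ≤ d x ∧ d x ≤ D)
    (hu : M.FE k T u u') (hw : M.FE k T w w') (hu' : M.FE k T u' u'') (hw' : M.FE k T w' w'')
    (hdu : ∀ t ∈ Icc 0 T, M.PiecewiseDeriv (u t) (du t))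
    (hdw : ∀ t ∈ Icc 0 T, M.PiecewiseDeriv (w t) (dw t))
    (huc : ∀ t ∈ Icc 0 T, ∀ n < M.N, ContinuousOn (u t) (Icc (M.pt n) (M.pt (n + 1))))
    (hwc : ∀ t ∈ Icc 0 T, ∀ n < M.N, ContinuousOn (w t) (Icc (M.pt n) (M.pt (n + 1))))
    (huc' : ∀ t ∈ Icc 0 T, ∀ n < M.N, ContinuousOn (u' t) (Icc (M.pt n) (M.pt (n + 1))))
    (hwc' : ∀ t ∈ Icc 0 T, ∀ n < M.N, ContinuousOn (w' t) (Icc (M.pt n) (M.pt (n + 1))))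
    (hbc : ∀ t ∈ Icc 0 T, u t xL = 0 ∧ u t xR = 0)
    (hbc' : ∀ t ∈ Icc 0 T, u' t xL = 0 ∧ u' t xR = 0)
    (hρp : M.TD T ρp ρp') (hρm : M.TD T ρm ρm')
    (eq1 : ∀ t ∈ Icc 0 T, ∀ q, M.PiecewisePoly (k - 1) q →
      a * inner2 xL xR (u' t) q + inner2 xL xR (dw t) q = inner2 xL xR (ρp t) q)
    (eq2 : ∀ t ∈ Icc 0 T, ∀ q, M.PiecewisePoly (k - 1) q →
      b * inner2 xL xR (w' t) q + inner2 xL xR (du t) q +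
        inner2 xL xR (w t) (fun x => d x * q x) = inner2 xL xR (ρm t) q)
    (hu0 : ∀ n < M.N, EqOn (u 0) (fun _ => 0) (Ioo (M.pt n) (M.pt (n + 1))))
    (hw0 : ∀ n < M.N, EqOn (w 0) (fun _ => 0) (Ioo (M.pt n) (M.pt (n + 1))))
    {t : ℝ} (ht : t ∈ Icc 0 T) :
    inner2 xL xR (u t) (u t) + inner2 xL xR (w t) (w t) ≤
      (a⁻¹ + b⁻¹ + 3 * (xR - xL) ^ 2 * D ^ 2 * b⁻¹) * (3 * ((1 + T) *
        ∫ s in (0 : ℝ)..t, (a⁻¹ * inner2 xL xR (ρp s) (ρp s) +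
            b⁻¹ * inner2 xL xR (ρm s) (ρm s)))) +
      3 * (xR - xL) * (a + b) * M.hsize * (6 * ((a⁻¹ * inner2 xL xR (ρp 0) (ρp 0) +
            b⁻¹ * inner2 xL xR (ρm 0) (ρm 0)) + (1 + T) *
        ∫ s in (0 : ℝ)..t, (a⁻¹ * inner2 xL xR (ρp' s) (ρp' s) +
            b⁻¹ * inner2 xL xR (ρm' s) (ρm' s)))) := by
  have nn : ∀ v, 0 ≤ inner2 xL xR v v := inner2_self_nonneg M.lt
  have h0T : (0 : ℝ) ∈ Icc 0 T := left_mem_Icc.mpr hT.le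
  have hd0' : ∀ x ∈ Icc xL xR, 0 ≤ d x := fun x hx => (hd0 x hx).1
  obtain ⟨U, W, hUW, hE⟩ := energy hT ha hb hd hd0' hu hw hdu hdw huc hwc hbc hρp.left hρm.left
    (fun t ht => eq1 t (Ioo_subset_Icc_self ht)) (fun t ht => eq2 t (Ioo_subset_Icc_self ht))
  have hdu' : ∀ t ∈ Icc 0 T, M.PiecewiseDeriv (u' t) (_root_.deriv (u' t)) :=
    fun t ht => (hu.poly ht).2.piecewiseDeriv
  have hdw' : ∀ t ∈ Icc 0 T, M.PiecewiseDeriv (w' t) (_root_.deriv (w' t)) :=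
    fun t ht => (hw.poly ht).2.piecewiseDeriv
  have tdu := hu.td_deriv hdu hdu'
  have tdw := hw.td_deriv hdw hdw'
  -- the error equations differentiated in time
  have eq1' : ∀ t ∈ Ioo 0 T, ∀ q, M.PiecewisePoly (k - 1) q →
      a * inner2 xL xR (u'' t) q + inner2 xL xR (_root_.deriv (w' t)) q =
        inner2 xL xR (ρp' t) q := by
    intro t ht q hq
    have h1 := ((hu'.td.hasDerivAt_inner2 hq.pc ht).const_mul a).add
      (tdw.hasDerivAt_inner2 hq.pc ht)
    refine h1.unique ((hρp.hasDerivAt_inner2 hq.pc ht).congr_of_eventuallyEq ?_)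
    filter_upwards [Icc_mem_nhds ht.1 ht.2] with s hs using eq1 s hs q hq
  have eq2' : ∀ t ∈ Ioo 0 T, ∀ q, M.PiecewisePoly (k - 1) q →
      b * inner2 xL xR (w'' t) q + inner2 xL xR (_root_.deriv (u' t)) q +
        inner2 xL xR (w' t) (fun x => d x * q x) = inner2 xL xR (ρm' t) q := by
    intro t ht q hq
    have h1 := (((hw'.td.hasDerivAt_inner2 hq.pc ht).const_mul b).add
      (tdu.hasDerivAt_inner2 hq.pc ht)).add (hw.td.hasDerivAt_inner2 (hd.pc.mul hq.pc) ht)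
    refine h1.unique ((hρm.hasDerivAt_inner2 hq.pc ht).congr_of_eventuallyEq ?_)
    filter_upwards [Icc_mem_nhds ht.1 ht.2] with s hs using eq2 s hs q hq
  obtain ⟨V, Z, hVZ, hE2⟩ := energy hT ha hb hd hd0' hu' hw' hdu' hdw' huc' hwc' hbc'
    hρp.right hρm.right eq1' eq2'
  have hR := residual_bound hT ha hb hρp hρm ht
  have hEt := hE t ht
  have hE2t := hE2 t ht
  -- the initial energy vanishes
  rw [(hUW 0 h0T).1.2 _ (hUW 0 h0T).1.1, inner2_zero_left hu0,
    (hUW 0 h0T).2.2 _ (hUW 0 h0T).2.1, inner2_zero_left hw0] at hEt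
  -- the initial energy of the time derivative is bounded by the initial residual
  have hV0 := (hVZ 0 h0T).1
  have hZ0 := (hVZ 0 h0T).2
  have i1 := eq1 0 h0T _ hV0.1
  have i2 := eq2 0 h0T _ hZ0.1
  rw [inner2_zero_left ((hdw 0 h0T).eq_zero hw0), ← hV0.2 _ hV0.1] at i1
  rw [inner2_zero_left ((hdu 0 h0T).eq_zero hu0), inner2_zero_left hw0, ← hZ0.2 _ hZ0.1] at i2
  have j1 := inner2_young (hρp.left.pc h0T) hV0.1.pc (inv_pos.mpr ha)
  have j2 := inner2_young (hρm.left.pc h0T) hZ0.1.pc (inv_pos.mpr hb)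
  rw [inv_inv] at j1 j2
  have n1 := norm_le_proj (hu.poly ht).1 (hdu t ht) (hUW t ht).1
  have n2 := norm_le_proj (hw.poly ht).1 (hdw t ht) (hUW t ht).2
  have dbd := deriv_bound ha hb hd hd0 ((hu.poly ht).1.deriv (hdu t ht))
    ((hw.poly ht).1.deriv (hdw t ht)) (hρp.left.pc ht) (hρm.left.pc ht)
    (hVZ t ht).1 (hUW t ht).2 (hVZ t ht).2 (eq1 t ht) (eq2 t ht)
  have hh := M.hsize_pos
  have hL := M.hsize_le
  have pA := nn (U t)
  have pB := nn (W t)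
  have pV := nn (V t)
  have pZ := nn (Z t)
  have prp := nn (ρp t)
  have prm := nn (ρm t)
  generalize (∫ s in (0 : ℝ)..t, (a⁻¹ * inner2 xL xR (ρp s) (ρp s) +
            b⁻¹ * inner2 xL xR (ρm s) (ρm s))) = I1 at *
  generalize (∫ s in (0 : ℝ)..t, (a⁻¹ * inner2 xL xR (ρp' s) (ρp' s) +
            b⁻¹ * inner2 xL xR (ρm' s) (ρm' s))) = I2 at *
  generalize inner2 xL xR (U t) (U t) = A at *
  generalize inner2 xL xR (W t) (W t) = B at *
  generalize inner2 xL xR (V t) (V t) = V2 at *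
  generalize inner2 xL xR (Z t) (Z t) = Z2 at *
  generalize inner2 xL xR (ρp t) (ρp t) = rp at *
  generalize inner2 xL xR (ρm t) (ρm t) = rm at *
  generalize inner2 xL xR (du t) (du t) = du2 at *
  generalize inner2 xL xR (dw t) (dw t) = dw2 at *
  generalize M.hsize = h at *
  generalize hLd : xR - xL = L at *
  set E := a * A + b * B with hEdef
  set R := a⁻¹ * rp + b⁻¹ * rm with hRdef
  set E2 := a * V2 + b * Z2 with hE2def
  have hRE2 : R + E2 ≤ 6 * ((a⁻¹ * inner2 xL xR (ρp 0) (ρp 0) +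
      b⁻¹ * inner2 xL xR (ρm 0) (ρm 0)) + (1 + T) * I2) := by linarith
  have hE' : E ≤ 3 * ((1 + T) * I1) := by linarith
  have hbE : b⁻¹ * E = b⁻¹ * a * A + B := by rw [hEdef]; field_simp
  have haE : a⁻¹ * E = A + a⁻¹ * b * B := by rw [hEdef]; field_simp
  have q1 : 0 ≤ b⁻¹ * a * A := by positivity
  have q2 : 0 ≤ a⁻¹ * b * B := by positivity
  have hR' : rp + rm ≤ (a + b) * R := by
    have : (a + b) * R = rp + rm + (b * a⁻¹ * rp + a * b⁻¹ * rm) := by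
      rw [hRdef]; field_simp; ring
    have : 0 ≤ b * a⁻¹ * rp + a * b⁻¹ * rm := by positivity
    linarith
  have hE2' : a ^ 2 * V2 + b ^ 2 * Z2 ≤ (a + b) * E2 := by
    have : (a + b) * E2 = a ^ 2 * V2 + b ^ 2 * Z2 + (a * b * V2 + a * b * Z2) := by
      rw [hE2def]; ring
    have : 0 ≤ a * b * V2 + a * b * Z2 := by positivity
    linarith
  have s1 : du2 + dw2 ≤ 3 * ((a + b) * (R + E2) + D ^ 2 * B) := by linarith
  have s2 : h ^ 2 * (du2 + dw2) ≤ h ^ 2 * (3 * ((a + b) * (R + E2) + D ^ 2 * B)) :=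
    mul_le_mul_of_nonneg_left s1 (sq_nonneg h)
  have s3 : h ^ 2 * (3 * ((a + b) * (R + E2))) ≤ L * h * (3 * ((a + b) * (R + E2))) := by
    refine mul_le_mul_of_nonneg_right (by nlinarith) ?_
    positivity
  have s4 : h ^ 2 * (3 * (D ^ 2 * B)) ≤ L ^ 2 * (3 * (D ^ 2 * (b⁻¹ * E))) := by
    refine mul_le_mul (pow_le_pow_left₀ hh.le hL 2) ?_ (by positivity) (by positivity)
    have : D ^ 2 * B ≤ D ^ 2 * (b⁻¹ * E) :=
      mul_le_mul_of_nonneg_left (by linarith) (sq_nonneg D)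
    linarith
  have hLpos : 0 < L := by linarith
  have s5 : (a⁻¹ + b⁻¹ + 3 * L ^ 2 * D ^ 2 * b⁻¹) * E ≤
      (a⁻¹ + b⁻¹ + 3 * L ^ 2 * D ^ 2 * b⁻¹) * (3 * ((1 + T) * I1)) :=
    mul_le_mul_of_nonneg_left hE' (by positivity)
  have s6 : 3 * L * (a + b) * h * (R + E2) ≤ 3 * L * (a + b) * h *
      (6 * ((a⁻¹ * inner2 xL xR (ρp 0) (ρp 0) +
      b⁻¹ * inner2 xL xR (ρm 0) (ρm 0)) + (1 + T) * I2)) :=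
    mul_le_mul_of_nonneg_left hRE2 (by positivity)
  linarith

end Mesh

/-! ### Error equations and consistency residuals -/

namespace Mesh

variable {xL xR : ℝ} {M : Mesh xL xR} {T : ℝ} {k : ℕ}

lemma TD.of_classical {v v' : ℝ → ℝ → ℝ}
    (hd : ∀ t ∈ Icc 0 T, ∀ x ∈ Icc xL xR, HasDerivWithinAt (fun s => v s x) (v' t x) (Icc 0 T) t)
    (hv : ContinuousOn (fun z : ℝ × ℝ => v z.1 z.2) (Icc 0 T ×ˢ Icc xL xR))
    (hv' : ContinuousOn (fun z : ℝ × ℝ => v' z.1 z.2) (Icc 0 T ×ˢ Icc xL xR)) : M.TD T v v' := by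
  intro n hn
  have hsub := prod_mono_right (s := Icc (0 : ℝ) T) (M.Icc_subset hn)
  exact ⟨v, v', hv.mono hsub, hv'.mono hsub,
    fun t ht x hx => (hd t (Ioo_subset_Icc_self ht) x (M.Icc_subset hn hx)).hasDerivAt
      (Icc_mem_nhds ht.1 ht.2), fun _ _ _ _ => ⟨rfl, rfl⟩⟩

lemma error_eq1 {a : ℝ} {f pt mx dtp dxm Itp dIm q : ℝ → ℝ}
    (hpt : M.PC pt) (hmx : M.PC mx) (hdtp : M.PC dtp) (hdxm : M.PC dxm) (hItp : M.PC Itp)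
    (hdIm : M.PC dIm) (hq : M.PC q)
    (pde : ∀ x ∈ Icc xL xR, a * pt x + mx x = f x)
    (hI : inner2 xL xR dIm q = inner2 xL xR mx q)
    (eq : inner2 xL xR (fun x => a * dtp x) q + inner2 xL xR dxm q = inner2 xL xR f q) :
    a * inner2 xL xR (fun x => Itp x - dtp x) q + inner2 xL xR (fun x => dIm x - dxm x) q =
      inner2 xL xR (fun x => a * (Itp x - pt x)) q := by
  have hf : inner2 xL xR f q = inner2 xL xR (fun x => a * pt x + mx x) q :=
    PC.integral_congr (((hpt.cmul a).add hmx).mul hq) fun n hn x hx => by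
      simp only [pde x (Ioo_subset_Icc_self (M.Ioo_subset hn hx))]
  rw [hf, inner2_add_left (hpt.cmul a) hmx hq, inner2_cmul_left, inner2_cmul_left] at eq
  rw [inner2_cmul_left, inner2_sub_left hItp hdtp hq, inner2_sub_left hdIm hdxm hq,
    inner2_sub_left hItp hpt hq, hI]
  linarith

/-- The friction term of the method only sees `π m_h`, but for piecewise constant `d` one has
`(d π m_h, q) = (m_h, d q)`, so it is consistent. -/
lemma error_eq2 {b : ℝ} {d g mt m px dtm dxp mh pim Itm Im dIp q : ℝ → ℝ}
    (hd : M.PiecewisePoly 0 d)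
    (hmt : M.PC mt) (hm : M.PC m) (hpx : M.PC px) (hdtm : M.PC dtm) (hdxp : M.PC dxp)
    (hmh : M.PC mh) (hItm : M.PC Itm) (hIm : M.PC Im)
    (hdIp : M.PC dIp) (hq : M.PiecewisePoly (k - 1) q)
    (pde : ∀ x ∈ Icc xL xR, b * mt x + px x + d x * m x = g x)
    (hI : inner2 xL xR dIp q = inner2 xL xR px q)
    (hpim : IsL2Proj M (k - 1) mh pim)
    (eq : inner2 xL xR (fun x => b * dtm x) q + inner2 xL xR dxp q +
      inner2 xL xR (fun x => d x * pim x) q = inner2 xL xR g q) :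
    b * inner2 xL xR (fun x => Itm x - dtm x) q + inner2 xL xR (fun x => dIp x - dxp x) q +
      inner2 xL xR (fun x => Im x - mh x) (fun x => d x * q x) =
      inner2 xL xR (fun x => b * (Itm x - mt x) + d x * (Im x - m x)) q := by
  have hqp := hq.pc
  have hdq := PiecewisePoly.mul_const hd hq
  have swap : ∀ v : ℝ → ℝ, inner2 xL xR (fun x => d x * v x) q =
      inner2 xL xR v (fun x => d x * q x) := by
    intro v
    unfold inner2
    congr 1
    ext x
    ring
  have hg : inner2 xL xR g q = inner2 xL xR (fun x => b * mt x + px x + d x * m x) q :=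
    PC.integral_congr ((((hmt.cmul b).add hpx).add (hd.pc.mul hm)).mul hqp) fun n hn x hx => by
      simp only [pde x (Ioo_subset_Icc_self (M.Ioo_subset hn hx))]
  rw [hg, inner2_add_left ((hmt.cmul b).add hpx) (hd.pc.mul hm) hqp,
    inner2_add_left (hmt.cmul b) hpx hqp, inner2_cmul_left, inner2_cmul_left, swap, swap,
    hpim.2 _ hdq] at eq
  rw [inner2_add_left ((hItm.sub hmt).cmul b) (hd.pc.mul (hIm.sub hm)) hqp,
    inner2_cmul_left, swap (fun x => Im x - m x), inner2_sub_left hItm hdtm hqp,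
    inner2_sub_left hdIp hdxp hqp, inner2_sub_left hIm hmh hdq.pc,
    inner2_sub_left hItm hmt hqp, inner2_sub_left hIm hm hdq.pc, hI]
  linarith

lemma residual_le {a b D : ℝ} {d X Y Z : ℝ → ℝ} (ha : 0 < a) (hb : 0 < b)
    (hd : M.PiecewisePoly 0 d) (hd0 : ∀ x ∈ Icc xL xR, 0 ≤ d x ∧ d x ≤ D)
    (hY : M.PC Y) (hZ : M.PC Z) :
    a⁻¹ * inner2 xL xR (fun x => a * X x) (fun x => a * X x) +
      b⁻¹ * inner2 xL xR (fun x => b * Y x + d x * Z x) (fun x => b * Y x + d x * Z x) ≤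
    a * inner2 xL xR X X + 2 * b * inner2 xL xR Y Y + 2 * D ^ 2 / b * inner2 xL xR Z Z := by
  have hbd := (hY.cmul b).add (hd.pc.mul hZ)
  have h := PC.integral_mono (hbd.mul hbd)
    (((hY.mul hY).cmul (2 * b ^ 2)).add (((hd.pc.mul hZ).mul (hd.pc.mul hZ)).cmul 2))
    fun n hn x hx => by
      nlinarith [sq_nonneg (b * Y x - d x * Z x)]
  rw [intervalIntegral.integral_add ((hY.mul hY).cmul (2 * b ^ 2)).intInt
    (((hd.pc.mul hZ).mul (hd.pc.mul hZ)).cmul 2).intInt,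
    intervalIntegral.integral_const_mul, intervalIntegral.integral_const_mul] at h
  have h2 := inner2_dmul_le hd hd0 hZ
  have h3 : inner2 xL xR (fun x => b * Y x + d x * Z x) (fun x => b * Y x + d x * Z x) ≤
      2 * b ^ 2 * inner2 xL xR Y Y + 2 * (D ^ 2 * inner2 xL xR Z Z) := by
    unfold inner2 at h2 ⊢
    linarith
  have h4 := mul_le_mul_of_nonneg_left h3 (inv_nonneg.mpr hb.le)
  have h5 : b⁻¹ * (2 * b ^ 2 * inner2 xL xR Y Y + 2 * (D ^ 2 * inner2 xL xR Z Z)) =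
      2 * b * inner2 xL xR Y Y + 2 * D ^ 2 / b * inner2 xL xR Z Z := by
    field_simp
  have h6 : a⁻¹ * inner2 xL xR (fun x => a * X x) (fun x => a * X x) = a * inner2 xL xR X X := by
    rw [inner2_cmul_left, inner2_comm X, inner2_cmul_left]
    field_simp
  linarith

end Mesh

/-- Collects the stability bound and the residual bounds into the final estimate; `R`, `R'` are the
weighted squared norms of the residual and of its time derivative. -/
lemma final_bound {a b D L h T t N : ℝ} {R R' mm tp tm ttp ttm : ℝ → ℝ} (ha : 0 < a) (hb : 0 < b)
    (hh : 0 < h) (hL : h ≤ L) (ht : t ∈ Icc 0 T)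
    (hR : ContinuousOn R (Icc 0 T)) (hR' : ContinuousOn R' (Icc 0 T))
    (hmm : ContinuousOn mm (Icc 0 T)) (htp : ContinuousOn tp (Icc 0 T))
    (htm : ContinuousOn tm (Icc 0 T)) (http : ContinuousOn ttp (Icc 0 T))
    (httm : ContinuousOn ttm (Icc 0 T))
    (nmm : ∀ s, 0 ≤ mm s) (ntp : ∀ s, 0 ≤ tp s) (ntm : ∀ s, 0 ≤ tm s) (nttp : ∀ s, 0 ≤ ttp s)
    (nttm : ∀ s, 0 ≤ ttm s)
    (hRle : ∀ s ∈ Icc 0 T, R s ≤ a * tp s + 2 * b * tm s + 2 * D ^ 2 / b * mm s)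
    (hRle' : ∀ s ∈ Icc 0 T, R' s ≤ a * ttp s + 2 * b * ttm s + 2 * D ^ 2 / b * tm s)
    (hN : N ≤ (a⁻¹ + b⁻¹ + 3 * L ^ 2 * D ^ 2 * b⁻¹) * (3 * ((1 + T) * ∫ s in (0 : ℝ)..t, R s)) +
      3 * L * (a + b) * h * (6 * (R 0 + (1 + T) * ∫ s in (0 : ℝ)..t, R' s))) :
    N ≤ (a + 2 * b + 2 * D ^ 2 / b) *
        (3 * (a⁻¹ + b⁻¹ + 3 * L ^ 2 * D ^ 2 * b⁻¹) + 18 * L * (a + b) * (1 + L)) * (1 + T) ^ 2 *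
      (h * tp 0 + h * tm 0 + h * mm 0 +
        ∫ s in (0 : ℝ)..t, (mm s + tp s + tm s + h * ttp s + h * ttm s)) := by
  set K3 := a + 2 * b + 2 * D ^ 2 / b with hK3
  set K1 := a⁻¹ + b⁻¹ + 3 * L ^ 2 * D ^ 2 * b⁻¹ with hK1
  set J : ℝ → ℝ := fun s => mm s + tp s + tm s + h * ttp s + h * ttm s with hJ
  have hc : 0 ≤ 2 * D ^ 2 / b := by positivity
  have hK3pos : 0 < K3 := by positivity
  have hK1pos : 0 < K1 := by positivity
  have hLpos : 0 < L := by linarith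
  have hT : 0 ≤ T := ht.1.trans ht.2
  have hsub : Icc 0 t ⊆ Icc 0 T := Icc_subset_Icc_right ht.2
  have hJc : ContinuousOn J (Icc 0 T) :=
    (((hmm.add htp).add htm).add (http.const_smul h)).add (httm.const_smul h)
  have ii : ∀ {F : ℝ → ℝ}, ContinuousOn F (Icc 0 T) → IntervalIntegrable F volume 0 t :=
    fun hF => (hF.mono hsub).intervalIntegrable_of_Icc ht.1
  have c1 : a ≤ K3 := by linarith
  have c2 : 2 * b ≤ K3 := by linarith
  have c3 : 2 * D ^ 2 / b ≤ K3 := by linarith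
  have key : ∀ {x y z : ℝ}, 0 ≤ x → 0 ≤ y → 0 ≤ z →
      a * x + 2 * b * y + 2 * D ^ 2 / b * z ≤ K3 * (x + y + z) := by
    intro x y z hx hy hz
    have := mul_le_mul_of_nonneg_right c1 hx
    have := mul_le_mul_of_nonneg_right c2 hy
    have := mul_le_mul_of_nonneg_right c3 hz
    linarith
  have i1 : ∫ s in (0 : ℝ)..t, R s ≤ K3 * ∫ s in (0 : ℝ)..t, J s := by
    rw [← intervalIntegral.integral_const_mul]
    refine integral_mono_on ht.1 (ii hR) ((ii hJc).const_mul K3) fun s hs => ?_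
    refine ((hRle s (hsub hs)).trans (key (ntp s) (ntm s) (nmm s))).trans
      (mul_le_mul_of_nonneg_left ?_ hK3pos.le)
    have := mul_nonneg hh.le (nttp s)
    have := mul_nonneg hh.le (nttm s)
    simp only [hJ]
    linarith
  have i2 : h * ∫ s in (0 : ℝ)..t, R' s ≤ K3 * (1 + L) * ∫ s in (0 : ℝ)..t, J s := by
    rw [← intervalIntegral.integral_const_mul, ← intervalIntegral.integral_const_mul]
    refine integral_mono_on ht.1 ((ii hR').const_mul h) ((ii hJc).const_mul _) fun s hs => ?_
    have e1 := mul_le_mul_of_nonneg_left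
      ((hRle' s (hsub hs)).trans (key (nttp s) (nttm s) (ntm s))) hh.le
    have e2 : h * (ttp s + ttm s + tm s) ≤ (1 + L) * J s := by
      have := mul_nonneg hh.le (nttp s)
      have := mul_nonneg hh.le (nttm s)
      have := mul_le_mul_of_nonneg_right hL (ntm s)
      have hJ0 : 0 ≤ L * (mm s + tp s + h * ttp s + h * ttm s) := by
        have := nmm s
        have := ntp s
        positivity
      have := nmm s
      have := ntp s
      have := ntm s
      simp only [hJ]
      linarith
    have e3 := mul_le_mul_of_nonneg_left e2 hK3pos.le
    linarith
  have i3 : h * R 0 ≤ K3 * (h * tp 0 + h * tm 0 + h * mm 0) := by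
    have := mul_le_mul_of_nonneg_left
      ((hRle 0 ⟨le_rfl, hT⟩).trans (key (ntp 0) (ntm 0) (nmm 0))) hh.le
    linarith
  have hI : 0 ≤ ∫ s in (0 : ℝ)..t, J s := integral_nonneg ht.1 fun s _ => by
    have := nmm s
    have := ntp s
    have := ntm s
    have := nttp s
    have := nttm s
    simp only [hJ]
    positivity
  set S := h * tp 0 + h * tm 0 + h * mm 0 with hS
  have hS0 : 0 ≤ S := by
    have := nmm 0
    have := ntp 0
    have := ntm 0
    positivity
  set I := ∫ s in (0 : ℝ)..t, J s
  have hτ : (1 : ℝ) ≤ 1 + T := by linarith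
  set τ := 1 + T
  have hτ2 : τ ≤ τ ^ 2 := by nlinarith
  have m1 : K1 * (3 * (τ * ∫ s in (0 : ℝ)..t, R s)) ≤ 3 * K1 * K3 * (τ ^ 2 * (S + I)) := by
    have : τ * ∫ s in (0 : ℝ)..t, R s ≤ K3 * (τ ^ 2 * (S + I)) := by
      calc τ * ∫ s in (0 : ℝ)..t, R s ≤ τ * (K3 * I) :=
            mul_le_mul_of_nonneg_left i1 (by linarith)
        _ = K3 * (τ * I) := by ring
        _ ≤ K3 * (τ ^ 2 * (S + I)) := by
            refine mul_le_mul_of_nonneg_left ?_ hK3pos.le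
            exact mul_le_mul hτ2 (by linarith) hI (by positivity)
    have := mul_le_mul_of_nonneg_left this hK1pos.le
    linarith
  have m2 : h * (R 0 + τ * ∫ s in (0 : ℝ)..t, R' s) ≤ K3 * (1 + L) * (τ ^ 2 * (S + I)) := by
    have f1 := mul_le_mul_of_nonneg_left i2 (show 0 ≤ τ by linarith)
    have f2 : τ * I ≤ τ ^ 2 * I := mul_le_mul_of_nonneg_right hτ2 hI
    have f3 : S ≤ (1 + L) * (τ ^ 2 * S) := by
      have g1 : 1 * S ≤ τ ^ 2 * S := mul_le_mul_of_nonneg_right (by linarith) hS0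
      have g2 : 0 ≤ L * (τ ^ 2 * S) := by positivity
      linarith
    have f4 := mul_le_mul_of_nonneg_left f3 hK3pos.le
    have f5 := mul_le_mul_of_nonneg_left f2 (show 0 ≤ K3 * (1 + L) by positivity)
    linarith
  have m3 := mul_le_mul_of_nonneg_left m2 (show 0 ≤ 18 * L * (a + b) by positivity)
  linarith

/-- **Discrete error estimate (Lemma 4).** Assume `d ∈ P_0(T_h)` is piecewise constant with
`0 < d_min ≤ d ≤ d_max`.  Let `(p, m)` be a sufficiently smooth classical solution of the
damped linear wave system and `(p_h, m_h)` a semidiscrete solution of the inexact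
Petrov--Galerkin method with interpolated initial values.  Then, with `I = I_h^k`, `h` the
mesh size and a constant `C` depending only on `a`, `b`, `d_max` and `x_R - x_L`,
`‖I p(t) - p_h(t)‖² + ‖I m(t) - m_h(t)‖² ≤ C (1+T)² (h ‖I ∂_t p(0) - ∂_t p(0)‖²
 + h ‖I ∂_t m(0) - ∂_t m(0)‖² + h ‖I m(0) - m(0)‖² + ∫_0^t ‖I m(s) - m(s)‖²
 + ‖I ∂_t p(s) - ∂_t p(s)‖² + ‖I ∂_t m(s) - ∂_t m(s)‖² + h ‖I ∂_tt p(s) - ∂_tt p(s)‖²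
 + h ‖I ∂_tt m(s) - ∂_tt m(s)‖² ds)`. -/
theorem discrete_error_estimate
    (xL xR : ℝ) (hxLR : xL < xR) (a b d_max : ℝ) (ha : 0 < a) (hb : 0 < b) :
    ∃ C : ℝ, 0 < C ∧
      ∀ (k : ℕ), 1 ≤ k →
      ∀ (M : Mesh xL xR) (T : ℝ), 0 < T →
      ∀ (d : ℝ → ℝ) (d_min : ℝ), 0 < d_min →
        M.PiecewisePoly 0 d →
        (∀ x ∈ Set.Icc xL xR, d_min ≤ d x ∧ d x ≤ d_max) →
      ∀ (f g : ℝ → ℝ → ℝ),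
        ContinuousOn (fun z : ℝ × ℝ => f z.1 z.2) (Set.Icc (0 : ℝ) T ×ˢ Set.Icc xL xR) →
        ContinuousOn (fun z : ℝ × ℝ => g z.1 z.2) (Set.Icc (0 : ℝ) T ×ˢ Set.Icc xL xR) →
      -- the classical solution (p, m) with all partial derivatives
      -- ∂_t^i ∂_x^j (i ≤ 2, j ≤ 1), existing and jointly continuous
      ∀ (p m pt ptt px ptx pttx mt mtt mx mtx mttx : ℝ → ℝ → ℝ),
        (∀ t ∈ Set.Icc (0 : ℝ) T, ∀ x ∈ Set.Icc xL xR,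
          HasDerivWithinAt (fun s => p s x) (pt t x) (Set.Icc (0 : ℝ) T) t ∧
          HasDerivWithinAt (fun s => pt s x) (ptt t x) (Set.Icc (0 : ℝ) T) t ∧
          HasDerivWithinAt (fun s => m s x) (mt t x) (Set.Icc (0 : ℝ) T) t ∧
          HasDerivWithinAt (fun s => mt s x) (mtt t x) (Set.Icc (0 : ℝ) T) t) →
        (∀ t ∈ Set.Icc (0 : ℝ) T, ∀ x ∈ Set.Icc xL xR,
          HasDerivWithinAt (fun y => p t y) (px t x) (Set.Icc xL xR) x ∧
          HasDerivWithinAt (fun y => pt t y) (ptx t x) (Set.Icc xL xR) x ∧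
          HasDerivWithinAt (fun y => ptt t y) (pttx t x) (Set.Icc xL xR) x ∧
          HasDerivWithinAt (fun y => m t y) (mx t x) (Set.Icc xL xR) x ∧
          HasDerivWithinAt (fun y => mt t y) (mtx t x) (Set.Icc xL xR) x ∧
          HasDerivWithinAt (fun y => mtt t y) (mttx t x) (Set.Icc xL xR) x) →
        (∀ F ∈ [p, pt, ptt, px, ptx, pttx, m, mt, mtt, mx, mtx, mttx],
          ContinuousOn (fun z : ℝ × ℝ => F z.1 z.2)
            (Set.Icc (0 : ℝ) T ×ˢ Set.Icc xL xR)) →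
        -- the damped linear wave system and the boundary conditions
        (∀ t ∈ Set.Icc (0 : ℝ) T, ∀ x ∈ Set.Icc xL xR,
          a * pt t x + mx t x = f t x) →
        (∀ t ∈ Set.Icc (0 : ℝ) T, ∀ x ∈ Set.Icc xL xR,
          b * mt t x + px t x + d x * m t x = g t x) →
        (∀ t ∈ Set.Icc (0 : ℝ) T, p t xL = 0 ∧ p t xR = 0) →
      -- the semidiscrete solution, twice continuously differentiable in time,
      -- with interpolated initial values
      ∀ (sol : PGSol M k T a b d f g) (dttp dttm : ℝ → ℝ → ℝ),
        (∀ t ∈ Set.Icc (0 : ℝ) T, ∀ x,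
          HasDerivWithinAt (fun s => sol.dtp s x) (dttp t x) (Set.Icc (0 : ℝ) T) t ∧
          HasDerivWithinAt (fun s => sol.dtm s x) (dttm t x) (Set.Icc (0 : ℝ) T) t) →
        (∀ x, ContinuousOn (fun t => dttp t x) (Set.Icc (0 : ℝ) T)) →
        (∀ x, ContinuousOn (fun t => dttm t x) (Set.Icc (0 : ℝ) T)) →
        IsInterp M k (p 0) (px 0) (sol.p 0) (sol.dxp 0) →
        IsInterp M k (m 0) (mx 0) (sol.m 0) (sol.dxm 0) →
      -- the interpolants I_h^k of p, m and their time derivatives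
      ∀ (Ip dIp Im dIm Itp dItp Itm dItm Ittp dIttp Ittm dIttm : ℝ → ℝ → ℝ),
        (∀ s ∈ Set.Icc (0 : ℝ) T, IsInterp M k (p s) (px s) (Ip s) (dIp s)) →
        (∀ s ∈ Set.Icc (0 : ℝ) T, IsInterp M k (m s) (mx s) (Im s) (dIm s)) →
        (∀ s ∈ Set.Icc (0 : ℝ) T, IsInterp M k (pt s) (ptx s) (Itp s) (dItp s)) →
        (∀ s ∈ Set.Icc (0 : ℝ) T, IsInterp M k (mt s) (mtx s) (Itm s) (dItm s)) →
        (∀ s ∈ Set.Icc (0 : ℝ) T, IsInterp M k (ptt s) (pttx s) (Ittp s) (dIttp s)) →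
        (∀ s ∈ Set.Icc (0 : ℝ) T, IsInterp M k (mtt s) (mttx s) (Ittm s) (dIttm s)) →
      ∀ t ∈ Set.Icc (0 : ℝ) T,
        (L2norm xL xR (fun x => Ip t x - sol.p t x)) ^ 2 +
          (L2norm xL xR (fun x => Im t x - sol.m t x)) ^ 2 ≤
          C * (1 + T) ^ 2 *
            (M.hsize * (L2norm xL xR (fun x => Itp 0 x - pt 0 x)) ^ 2 +
              M.hsize * (L2norm xL xR (fun x => Itm 0 x - mt 0 x)) ^ 2 +
              M.hsize * (L2norm xL xR (fun x => Im 0 x - m 0 x)) ^ 2 +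
              ∫ s in (0 : ℝ)..t,
                ((L2norm xL xR (fun x => Im s x - m s x)) ^ 2 +
                  (L2norm xL xR (fun x => Itp s x - pt s x)) ^ 2 +
                  (L2norm xL xR (fun x => Itm s x - mt s x)) ^ 2 +
                  M.hsize * (L2norm xL xR (fun x => Ittp s x - ptt s x)) ^ 2 +
                  M.hsize * (L2norm xL xR (fun x => Ittm s x - mtt s x)) ^ 2)) := by
  refine ⟨(a + 2 * b + 2 * d_max ^ 2 / b) *
    (3 * (a⁻¹ + b⁻¹ + 3 * (xR - xL) ^ 2 * d_max ^ 2 * b⁻¹) +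
      18 * (xR - xL) * (a + b) * (1 + (xR - xL))), ?_, ?_⟩
  · have : 0 < xR - xL := by linarith
    positivity
  intro k hk M T hT d d_min hdmin hd hdb f g _ _ p m pt ptt px ptx pttx mt mtt mx mtx mttx
    hdt hdx hcont pde1 pde2 hbc sol dttp dttm hdtt hcttp hcttm hp0 hm0
    Ip dIp Im dIm Itp dItp Itm dItm Ittp dIttp Ittm dIttm hIp hIm hItp hItm hIttp hIttm t ht
  simp only [List.mem_cons, List.not_mem_nil, or_false, forall_eq_or_imp, forall_eq] at hcont
  obtain ⟨cp, cpt, cptt, cpx, cptx, cpttx, cm, cmt, cmtt, cmx, cmtx, cmttx⟩ := hcont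
  have h0T : (0 : ℝ) ∈ Icc 0 T := left_mem_Icc.mpr hT.le
  have hd0 : ∀ x ∈ Icc xL xR, 0 ≤ d x ∧ d x ≤ d_max := fun x hx =>
    ⟨hdmin.le.trans (hdb x hx).1, (hdb x hx).2⟩
  have slice : ∀ {F : ℝ → ℝ → ℝ},
      ContinuousOn (fun z : ℝ × ℝ => F z.1 z.2) (Icc 0 T ×ˢ Icc xL xR) →
      ∀ s ∈ Icc 0 T, ContinuousOn (F s) (Icc xL xR) := fun hF s hs =>
    hF.comp (f := fun x => (s, x)) (by fun_prop) fun x hx => ⟨hs, hx⟩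
  -- the discrete solution and the interpolants as curves in the finite element space
  have feph := Mesh.FE.of_pointwise hT sol.p_poly sol.dtp_spec sol.dtp_cont
  have femh := Mesh.FE.of_pointwise hT sol.m_poly sol.dtm_spec sol.dtm_cont
  have feph' := Mesh.FE.of_pointwise hT (fun s hs => (feph.poly hs).2)
    (fun s hs x => (hdtt s hs x).1) hcttp
  have femh' := Mesh.FE.of_pointwise hT (fun s hs => (femh.poly hs).2)
    (fun s hs x => (hdtt s hs x).2) hcttm
  have feIp := Mesh.FE.of_interp hT hk (fun s hs x hx => (hdt s hs x hx).1)
    (fun s hs x hx => (hdx s hs x hx).1) (fun s hs x hx => (hdx s hs x hx).2.1)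
    cp cpt cpx cptx hIp hItp
  have feItp := Mesh.FE.of_interp hT hk (fun s hs x hx => (hdt s hs x hx).2.1)
    (fun s hs x hx => (hdx s hs x hx).2.1) (fun s hs x hx => (hdx s hs x hx).2.2.1)
    cpt cptt cptx cpttx hItp hIttp
  have feIm := Mesh.FE.of_interp hT hk (fun s hs x hx => (hdt s hs x hx).2.2.1)
    (fun s hs x hx => (hdx s hs x hx).2.2.2.1) (fun s hs x hx => (hdx s hs x hx).2.2.2.2.1)
    cm cmt cmx cmtx hIm hItm
  have feItm := Mesh.FE.of_interp hT hk (fun s hs x hx => (hdt s hs x hx).2.2.2)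
    (fun s hs x hx => (hdx s hs x hx).2.2.2.2.1) (fun s hs x hx => (hdx s hs x hx).2.2.2.2.2)
    cmt cmtt cmtx cmttx hItm hIttm
  -- the interpolation errors as differentiable curves
  have tdm := feIm.td.sub (Mesh.TD.of_classical (fun s hs x hx => (hdt s hs x hx).2.2.1) cm cmt)
  have tdpt := feItp.td.sub
    (Mesh.TD.of_classical (fun s hs x hx => (hdt s hs x hx).2.1) cpt cptt)
  have tdmt := feItm.td.sub
    (Mesh.TD.of_classical (fun s hs x hx => (hdt s hs x hx).2.2.2) cmt cmtt)
  have tdρp := tdpt.cmul a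
  have tdρm := (tdmt.cmul b).add (tdm.smul hd.pc)
  have pcd : ∀ {v dv : ℝ → ℝ}, M.PiecewisePoly k v → M.PiecewiseDeriv v dv → M.PC dv :=
    fun hv hdv => (hv.deriv hdv).pc
  -- boundary values of interpolants
  have node : ∀ {v dv Iv dIv : ℝ → ℝ}, IsInterp M k v dv Iv dIv → Iv xL = v xL ∧ Iv xR = v xR := by
    intro v dv Iv dIv h
    have h1 := h.2.2.2.1 0 (Nat.zero_le _)
    have h2 := h.2.2.2.1 M.N le_rfl
    rw [M.left] at h1
    rw [M.right] at h2
    exact ⟨h1, h2⟩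
  have hxL : xL ∈ Icc xL xR := left_mem_Icc.mpr hxLR.le
  have hxR : xR ∈ Icc xL xR := right_mem_Icc.mpr hxLR.le
  have zeroD : ∀ {v v' : ℝ → ℝ}, (∀ s ∈ Icc 0 T, v s = 0) →
      ∀ s ∈ Icc 0 T, HasDerivWithinAt v (v' s) (Icc 0 T) s → v' s = 0 := by
    intro v v' hv s hs hder
    exact (uniqueDiffOn_Icc hT s hs).eq_deriv _ hder
      ((hasDerivWithinAt_const s (Icc 0 T) (0 : ℝ)).congr hv (hv s hs))
  have stab := Mesh.stability (D := d_max) hT ha hb hd hd0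
    (feIp.sub feph) (feIm.sub femh) (feItp.sub feph') (feItm.sub femh')
    (fun s hs => (hIp s hs).2.2.1.sub (sol.dxp_spec s hs))
    (fun s hs => (hIm s hs).2.2.1.sub (sol.dxm_spec s hs))
    (fun s hs n hn => ((hIp s hs).2.1.sub (sol.p_cont s hs)).mono (M.Icc_subset hn))
    (fun s hs n hn => ((hIm s hs).2.1.sub (sol.m_cont s hs)).mono (M.Icc_subset hn))
    (fun s hs n hn => ((hItp s hs).2.1.mono (M.Icc_subset hn)).sub
      (Mesh.continuousOn_timeDeriv hT sol.p_poly sol.p_cont sol.dtp_spec hs hn))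
    (fun s hs n hn => ((hItm s hs).2.1.mono (M.Icc_subset hn)).sub
      (Mesh.continuousOn_timeDeriv hT sol.m_poly sol.m_cont sol.dtm_spec hs hn))
    (fun s hs => by
      rw [(node (hIp s hs)).1, (node (hIp s hs)).2, (hbc s hs).1, (hbc s hs).2,
        sol.p_bcL s hs, sol.p_bcR s hs]
      simp)
    (fun s hs => by
      rw [(node (hItp s hs)).1, (node (hItp s hs)).2,
        zeroD (v' := fun s => pt s xL) (fun s hs => (hbc s hs).1) s hs (hdt s hs xL hxL).1,
        zeroD (v' := fun s => pt s xR) (fun s hs => (hbc s hs).2) s hs (hdt s hs xR hxR).1,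
        zeroD (v' := fun s => sol.dtp s xL) sol.p_bcL s hs (sol.dtp_spec s hs xL),
        zeroD (v' := fun s => sol.dtp s xR) sol.p_bcR s hs (sol.dtp_spec s hs xR)]
      simp)
    tdρp tdρm
    (fun s hs q hq => Mesh.error_eq1 (Mesh.PC.of_continuousOn (slice cpt s hs))
      (Mesh.PC.of_continuousOn (slice cmx s hs)) (feph.poly hs).2.pc
      (pcd (sol.m_poly s hs) (sol.dxm_spec s hs)) (hItp s hs).1.pc
      (pcd (hIm s hs).1 (hIm s hs).2.2.1) hq.pc (pde1 s hs) ((hIm s hs).2.2.2.2 q hq)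
      (sol.eq1 s hs q hq))
    (fun s hs q hq => Mesh.error_eq2 hd (Mesh.PC.of_continuousOn (slice cmt s hs))
      (Mesh.PC.of_continuousOn (slice cm s hs)) (Mesh.PC.of_continuousOn (slice cpx s hs))
      (femh.poly hs).2.pc (pcd (sol.p_poly s hs) (sol.dxp_spec s hs)) (sol.m_poly s hs).pc
      (hItm s hs).1.pc (hIm s hs).1.pc (pcd (hIp s hs).1 (hIp s hs).2.2.1) hq (pde2 s hs)
      ((hIp s hs).2.2.2.2 q hq) (sol.pim_spec s hs) (sol.eq2 s hs q hq))
    (fun n hn x hx => sub_eq_zero.mpr (Mesh.interp_unique hk (hIp 0 h0T) hp0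
      (fun x hx => (hdx 0 h0T x hx).1) (slice cpx 0 h0T) hn hx))
    (fun n hn x hx => sub_eq_zero.mpr (Mesh.interp_unique hk (hIm 0 h0T) hm0
      (fun x hx => (hdx 0 h0T x hx).2.2.2.1) (slice cmx 0 h0T) hn hx))
    ht
  simp only [Mesh.L2norm_sq hxLR]
  have nn : ∀ v, 0 ≤ inner2 xL xR v v := Mesh.inner2_self_nonneg hxLR
  exact final_bound ha hb M.hsize_pos M.hsize_le ht
    (((tdρp.left.continuousOn_inner2 hT.le).const_smul a⁻¹).add
      ((tdρm.left.continuousOn_inner2 hT.le).const_smul b⁻¹))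
    (((tdρp.right.continuousOn_inner2 hT.le).const_smul a⁻¹).add
      ((tdρm.right.continuousOn_inner2 hT.le).const_smul b⁻¹))
    (tdm.left.continuousOn_inner2 hT.le) (tdpt.left.continuousOn_inner2 hT.le)
    (tdmt.left.continuousOn_inner2 hT.le) (tdpt.right.continuousOn_inner2 hT.le)
    (tdmt.right.continuousOn_inner2 hT.le)
    (fun _ => nn _) (fun _ => nn _) (fun _ => nn _) (fun _ => nn _) (fun _ => nn _)
    (fun s hs => Mesh.residual_le ha hb hd hd0 (tdmt.left.pc hs) (tdm.left.pc hs))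
    (fun s hs => Mesh.residual_le ha hb hd hd0 (tdmt.right.pc hs) (tdm.right.pc hs))
    stab
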